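/- Let Ω₁, …, Ωₘ ⊂ ℂ be bounded domains with (closure Ωᵢ)° = Ωᵢ, ℂ \ closure(Ωᵢ) connected, and a uniform bound M such that any two points of each Ωᵢ can be joined in Ωᵢ by a path of length at most M. Then for every f in A^∞(Ω₁ × ⋯ × Ωₘ), every n ∈ ℕ, and every ε > 0, there is a polynomial P(z₁,…,zₘ) with |∂^{α₁+⋯+αₘ}P/∂z₁^{α₁}⋯∂zₘ^{αₘ} − ∂^{α₁+⋯+αₘ}f/∂z₁^{α₁}⋯∂zₘ^{αₘ}| < ε on closure(Ω₁) × ⋯ × closure(Ωₘ) for all 0 ≤ αᵢ ≤ n. -/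

import Mathlib

/-- Two points are joined in `Ω` by a path of length at most `M`. -/
def JoinedLe (Ω : Set ℂ) (M : ℝ) (z w : ℂ) : Prop :=
  ∃ γ : ℝ → ℂ, ContinuousOn γ (Set.Icc 0 1) ∧ γ 0 = z ∧ γ 1 = w ∧
    (∀ t ∈ Set.Icc (0:ℝ) 1, γ t ∈ Ω) ∧ eVariationOn γ (Set.Icc 0 1) ≤ ENNReal.ofReal M

/-- The partial derivative of `u : ℂᵐ → ℂ` with respect to the `i`-th variable. -/
noncomputable def partialDeriv {m : ℕ} (i : Fin m) (u : (Fin m → ℂ) → ℂ) :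
    (Fin m → ℂ) → ℂ :=
  fun z => deriv (fun w => u (Function.update z i w)) (z i)

/-- The mixed partial derivative of `u : ℂᵐ → ℂ` in the directions listed in `l`. -/
noncomputable def mixedDeriv {m : ℕ} (l : List (Fin m)) (u : (Fin m → ℂ) → ℂ) :
    (Fin m → ℂ) → ℂ :=
  l.foldr (fun i v => partialDeriv i v) u

/-!
Mergelyan's theorem holds for functions with values in a Banach space: cut the function into pieces
supported in discs of radius `δ`, represent the pieces by the Cauchy–Pompeiu formula, and near the
complement of the compact set `K` replace the Cauchy kernel by a function that polynomials
approximate on `K`. Such kernels exist because the complement of `K` is connected: a chain of points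
of the complement leads to infinity, and the square root along the chain together with the inverse
Joukowski map produces a function with controlled size and the right expansion at infinity.

Approximating the highest derivative and integrating, with paths of bounded length keeping the error
of the primitives under control, one approximates all derivatives up to order `n` simultaneously.

In several variables, a function whose mixed derivatives extend continuously is a function of one
variable with values in the Banach space of jets in the other variables. It is holomorphic there,
since it is continuous and the evaluations at interior points separate the jets. Releasing one
variable at a time, the vector-valued theorem shows that the jet is in the closed span of the
products of jets of one-variable polynomials.
-/

namespace Mergelyan

open Set Filter Topology Metric MeasureTheory
open Complex (I exp)
open scoped Real ComplexConjugate

section PolynomialLimits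

/-- The functions whose restriction to the compact set `K` is a uniform limit of polynomials. The
values outside `K` are irrelevant. -/
def IsPolyLimit (K : Set ℂ) [CompactSpace K] (h : ℂ → ℂ) : Prop :=
  ∃ u ∈ (polynomialFunctions K).topologicalClosure, ∀ z : K, u z = h z

namespace IsPolyLimit

variable {K : Set ℂ} [CompactSpace K] {h k : ℂ → ℂ}

lemma continuousOn (hh : IsPolyLimit K h) : ContinuousOn h K := by
  obtain ⟨u, -, huh⟩ := hh
  exact continuousOn_iff_continuous_domRestrict.2 (u.continuous.congr huh)

lemma congr (hh : IsPolyLimit K h) (hhk : EqOn h k K) : IsPolyLimit K k := by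
  obtain ⟨u, hu, huh⟩ := hh
  exact ⟨u, hu, fun z => (huh z).trans (hhk z.2)⟩

lemma exists_polynomial_norm_sub_lt (hh : IsPolyLimit K h) {ε : ℝ} (hε : 0 < ε) :
    ∃ q : Polynomial ℂ, ∀ z ∈ K, ‖h z - q.eval z‖ < ε := by
  obtain ⟨u, hu, huh⟩ := hh
  rw [← SetLike.mem_coe, Subalgebra.topologicalClosure_coe, Metric.mem_closure_iff] at hu
  obtain ⟨v, hv, huv⟩ := hu ε hε
  rw [polynomialFunctions_coe] at hv
  obtain ⟨q, rfl⟩ := hv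
  refine ⟨q, fun z hz => ?_⟩
  simpa [dist_eq_norm, huh] using (ContinuousMap.dist_lt_iff hε).1 huv ⟨z, hz⟩

lemma add (hh : IsPolyLimit K h) (hk : IsPolyLimit K k) : IsPolyLimit K fun z => h z + k z := by
  obtain ⟨u, hu, huh⟩ := hh
  obtain ⟨v, hv, hvk⟩ := hk
  exact ⟨u + v, add_mem hu hv, fun z => by simp [huh, hvk]⟩

lemma mul (hh : IsPolyLimit K h) (hk : IsPolyLimit K k) : IsPolyLimit K fun z => h z * k z := by
  obtain ⟨u, hu, huh⟩ := hh
  obtain ⟨v, hv, hvk⟩ := hk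
  exact ⟨u * v, mul_mem hu hv, fun z => by simp [huh, hvk]⟩

variable (K) in
lemma const (c : ℂ) : IsPolyLimit K fun _ => c :=
  ⟨algebraMap ℂ _ c, Subalgebra.algebraMap_mem _ c, fun z => by simp⟩

variable (K) in
lemma id : IsPolyLimit K fun z => z :=
  ⟨Polynomial.toContinuousMapOnAlgHom K Polynomial.X,
    Subalgebra.le_topologicalClosure _ ⟨Polynomial.X, by simp⟩, fun z => by simp⟩

lemma finsetProd {ι : Type*} (s : Finset ι) {H : ι → ℂ → ℂ} (hH : ∀ i ∈ s, IsPolyLimit K (H i)) :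
    IsPolyLimit K fun z => ∏ i ∈ s, H i z := by
  classical
  induction s using Finset.induction_on with
  | empty => simpa using const K 1
  | insert a s ha ih =>
    simp only [Finset.prod_insert ha]
    exact (hH a (by simp)).mul (ih fun i hi => hH i (by simp [hi]))

lemma eval_comp (hh : IsPolyLimit K h) (q : Polynomial ℂ) :
    IsPolyLimit K fun z => q.eval (h z) := by
  obtain ⟨u, hu, huh⟩ := hh
  refine ⟨Polynomial.aeval u q, ?_, fun z => by rw [Polynomial.aeval_continuousMap_apply, huh]⟩
  rw [← Polynomial.aeval_subalgebra_coe q _ ⟨u, hu⟩]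
  exact Subtype.prop _

lemma of_tendstoUniformlyOn {H : ℕ → ℂ → ℂ} (hH : ∀ n, IsPolyLimit K (H n))
    (hlim : TendstoUniformlyOn H h atTop K) : IsPolyLimit K h := by
  have hcont : ContinuousOn h K :=
    hlim.continuousOn (Eventually.of_forall fun n => (hH n).continuousOn).frequently
  choose u hu huH using hH
  refine ⟨⟨K.domRestrict h, hcont.domRestrict⟩, ?_, fun z => rfl⟩
  refine (Subalgebra.isClosed_topologicalClosure _).mem_of_tendsto (f := u) (b := atTop) ?_
    (Eventually.of_forall hu)
  rw [ContinuousMap.tendsto_iff_tendstoUniformly, Metric.tendstoUniformly_iff]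
  intro ε hε
  filter_upwards [Metric.tendstoUniformlyOn_iff.1 hlim ε hε] with n hn z
  simpa [huH] using hn z z.2

/-- Runge's theorem for a single simple pole: `X - v` is invertible in `C(K, ℂ)`, and passing to a
closed subalgebra does not enlarge a spectrum with connected complement. -/
lemma inv_sub_const (hK : IsPreconnected Kᶜ) {v : ℂ} (hv : v ∉ K) :
    IsPolyLimit K fun z => (z - v)⁻¹ := by
  let A := (polynomialFunctions K).topologicalClosure
  have hA : IsClosed (A : Set C(K, ℂ)) := Subalgebra.isClosed_topologicalClosure _
  let X : A := ⟨Polynomial.toContinuousMapOnAlgHom K Polynomial.X,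
    Subalgebra.le_topologicalClosure _ ⟨Polynomial.X, by simp⟩⟩
  have hX : ∀ z : K, (X : C(K, ℂ)) z = z := fun z => by simp [X]
  have hspec : spectrum ℂ (X : C(K, ℂ)) = K := by
    rw [ContinuousMap.spectrum_eq_range, funext hX, Subtype.range_coe]
  have hspecA : spectrum ℂ X = K :=
    (Subalgebra.spectrum_eq_of_isPreconnected_compl A X (hspec.symm ▸ hK :)).trans hspec
  obtain ⟨w, hw⟩ := (spectrum.notMem_iff.1 (hspecA.symm ▸ hv)).exists_right_inv
  refine ⟨-w, neg_mem w.2, fun z => ?_⟩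
  have hwz : (v - (X : C(K, ℂ)) z) * (w : C(K, ℂ)) z = 1 :=
    congrArg (fun a : A => (a : C(K, ℂ)) z) hw
  rw [hX] at hwz
  refine eq_inv_of_mul_eq_one_right ?_
  rw [ContinuousMap.neg_apply, mul_neg, ← neg_mul, neg_sub, hwz]

lemma comp_of_differentiableOn_ball (hh : IsPolyLimit K h) {φ : ℂ → ℂ} {ρ R : ℝ}
    (hφ : DifferentiableOn ℂ φ (ball 0 R)) (hρR : ρ < R) (hρ : ∀ z ∈ K, ‖h z‖ ≤ ρ) :
    IsPolyLimit K fun z => φ (h z) := by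
  rcases K.eq_empty_or_nonempty with rfl | ⟨z₀, hz₀⟩
  · exact (const ∅ 0).congr fun z hz => absurd hz (notMem_empty z)
  have hρ₀ : 0 ≤ ρ := (norm_nonneg _).trans (hρ z₀ hz₀)
  obtain ⟨R₂, hρR₂, hR₂R⟩ := exists_between hρR
  obtain ⟨R₁, hρR₁, hR₁R₂⟩ := exists_between hρR₂
  lift R₂ to NNReal using hρ₀.trans hρR₂.le
  lift R₁ to NNReal using hρ₀.trans hρR₁.le
  have hφ₂ : DifferentiableOn ℂ φ (closedBall 0 R₂) := hφ.mono (closedBall_subset_ball hR₂R)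
  let p := cauchyPowerSeries φ 0 R₂
  have hp : HasFPowerSeriesOnBall φ p 0 R₂ :=
    hφ₂.hasFPowerSeriesOnBall (by exact_mod_cast hρ₀.trans_lt hρR₂)
  let q (n : ℕ) : Polynomial ℂ := ∑ i ∈ Finset.range n, Polynomial.monomial i (p.coeff i)
  have hq (n : ℕ) (y : ℂ) : p.partialSum n (y - 0) = (q n).eval y := by
    simp [q, FormalMultilinearSeries.partialSum, Polynomial.eval_finsetSum, mul_comm]
  have hlim := (hp.tendstoUniformlyOn' (by exact_mod_cast hR₁R₂ : (R₁ : ENNReal) < R₂)).comp h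
  simp only [hq] at hlim
  exact of_tendstoUniformlyOn (fun n => hh.eval_comp (q n))
    (hlim.mono fun z hz => by simpa using (hρ z hz).trans_lt hρR₁)

end IsPolyLimit

end PolynomialLimits

lemma exists_chain_of_joinedIn {X : Type*} [PseudoMetricSpace X] {U : Set X} (hU : IsOpen U)
    {p q : X} (hpq : JoinedIn U p q) {ε : ℝ} (hε : 0 < ε) :
    ∃ (N : ℕ) (v : ℕ → X), v 0 = p ∧ v N = q ∧ (∀ i, v i ∈ U) ∧
      ∀ i, dist (v (i + 1)) (v i) ≤ ε ∧
        ∀ z ∉ U, dist (v (i + 1)) (v i) ≤ ε * dist z (v (i + 1)) := by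
  obtain ⟨γ, hγ⟩ := hpq
  obtain ⟨d, hd, hdU⟩ : ∃ d, 0 < d ∧ cthickening d (range γ) ⊆ U :=
    (isCompact_range γ.continuous).exists_cthickening_subset_open hU (range_subset_iff.2 hγ)
  have hfar (z : X) (hz : z ∉ U) (t : unitInterval) : d ≤ dist z (γ t) := by
    by_contra! hlt
    exact hz (hdU (mem_cthickening_of_dist_le z (γ t) d _ (mem_range_self t) hlt.le))
  obtain ⟨t, ht₀, htm, ⟨N, hN⟩, ht⟩ := exists_monotone_Icc_subset_open_cover_unitInterval
    (c := fun x : X => γ ⁻¹' ball x (ε * min 1 d / 2)) (fun x => isOpen_ball.preimage γ.continuous)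
    fun s _ => mem_iUnion.2 ⟨γ s, mem_ball_self (by positivity)⟩
  have hstep (i : ℕ) : dist (γ (t (i + 1))) (γ (t i)) ≤ ε * min 1 d := by
    obtain ⟨x, hx⟩ := ht i
    have hle : t i ≤ t (i + 1) := htm i.le_succ
    have hl : dist (γ (t i)) x < ε * min 1 d / 2 := hx (left_mem_Icc.2 hle)
    have hr : dist (γ (t (i + 1))) x < ε * min 1 d / 2 := hx (right_mem_Icc.2 hle)
    linarith [dist_triangle_right (γ (t (i + 1))) (γ (t i)) x]
  refine ⟨N, fun i => γ (t i), by simp [ht₀], by simp [hN N le_rfl], fun i => hγ _, fun i =>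
    ⟨(hstep i).trans ?_, fun z hz => (hstep i).trans ?_⟩⟩
  · exact mul_le_of_le_one_right hε.le (min_le_left _ _)
  · gcongr
    exact (min_le_right _ _).trans (hfar z hz _)

lemma exists_chain_leaving_ball {K : Set ℂ} (hKc : IsCompact K) (hK : IsConnected Kᶜ) {p : ℂ}
    (hp : p ∉ K) {r : ℝ} (hr : 0 < r) :
    ∃ (N : ℕ) (v : ℕ → ℂ), v 0 = p ∧ r / 2 ≤ ‖v N - p‖ ∧ (∀ i ≤ N, ‖v i - p‖ ≤ r) ∧
      ∀ i, v i ∉ K ∧ ∀ z ∈ K, ‖v (i + 1) - v i‖ ≤ 1 / 2 * ‖z - v (i + 1)‖ := by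
  have hKpath : IsPathConnected Kᶜ :=
    (hKc.isClosed.isOpen_compl.isConnected_iff_isPathConnected).1 hK
  obtain ⟨q, hq⟩ := (ne_univ_iff_exists_notMem _).1 (hKc.union (isCompact_closedBall p r)).ne_univ
  rw [mem_union, not_or, mem_closedBall, not_le, dist_eq_norm] at hq
  obtain ⟨N, v, hv₀, hvN, hvK, hv⟩ := exists_chain_of_joinedIn hKc.isClosed.isOpen_compl
    (hKpath.joinedIn p hp q hq.1) (lt_min (by norm_num : (0 : ℝ) < 1 / 2) (half_pos hr))
  simp only [dist_eq_norm, mem_compl_iff, not_not] at hvK hv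
  have hex : ∃ i, r / 2 ≤ ‖v i - p‖ := ⟨N, by rw [hvN]; linarith [hq.2]⟩
  classical
  refine ⟨Nat.find hex, v, hv₀, Nat.find_spec hex, fun i hi => ?_, fun i => ⟨hvK i, fun z hz => ?_⟩⟩
  · rcases i with _ | i
    · simp [hv₀, hr.le]
    · have hbefore : ‖v i - p‖ < r / 2 := not_le.1 (Nat.find_min hex (by lia))
      have hstep : ‖v (i + 1) - v i‖ ≤ r / 2 := (hv i).1.trans (min_le_right _ _)
      linarith [norm_sub_le_norm_sub_add_norm_sub (v (i + 1)) (v i) p]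
  · refine ((hv i).2 z hz).trans ?_
    gcongr
    exact min_le_left _ _

section ChainSqrt

lemma sqrt_sq (x : ℂ) : Complex.sqrt x ^ 2 = x := by
  simp [Complex.sqrt]

lemma differentiableAt_sqrt {x : ℂ} (hx : x ∈ Complex.slitPlane) :
    DifferentiableAt ℂ Complex.sqrt x :=
  differentiableAt_id.cpow (differentiableAt_const _) hx

lemma differentiableOn_sqrt_one_add :
    DifferentiableOn ℂ (fun x : ℂ => Complex.sqrt (1 + x)) (ball 0 1) := fun x hx =>
  ((differentiableAt_sqrt (Complex.mem_slitPlane_of_norm_lt_one (mem_ball_zero_iff.1 hx))).comp x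
    (by fun_prop : DifferentiableAt ℂ (fun x : ℂ => 1 + x) x)).differentiableWithinAt

/-- A branch of the square root of `(z - v 0) / (z - v N)`, obtained by multiplying principal
square roots along the chain `v 0, …, v N`. The branch is continuous where the chain is fine
compared with the distance to `z`. -/
noncomputable def chainSqrt (v : ℕ → ℂ) (N : ℕ) (z : ℂ) : ℂ :=
  ∏ i ∈ Finset.range N, Complex.sqrt (1 + (v (i + 1) - v i) / (z - v (i + 1)))

variable {v : ℕ → ℂ} {N : ℕ} {z p : ℂ} {r : ℝ}

lemma chainSqrt_sq (hz : ∀ i ≤ N, z ≠ v i) : chainSqrt v N z ^ 2 = (z - v 0) / (z - v N) := by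
  simp only [chainSqrt, ← Finset.prod_pow, sqrt_sq]
  induction N with
  | zero => simp [sub_ne_zero.2 (hz 0 le_rfl)]
  | succ N ih =>
    have hN : z - v N ≠ 0 := sub_ne_zero.2 (hz N (by lia))
    have hN' : z - v (N + 1) ≠ 0 := sub_ne_zero.2 (hz (N + 1) le_rfl)
    rw [Finset.prod_range_succ, ih fun i hi => hz i (by lia), one_add_div hN', sub_add_sub_cancel,
      div_mul_div_cancel₀ hN]

lemma isPolyLimit_chainSqrt {K : Set ℂ} [CompactSpace K] (hK : IsPreconnected Kᶜ)
    (hv : ∀ i, v i ∉ K ∧ ∀ z ∈ K, ‖v (i + 1) - v i‖ ≤ 1 / 2 * ‖z - v (i + 1)‖) :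
    IsPolyLimit K (chainSqrt v N) := by
  refine IsPolyLimit.finsetProd _ fun i _ => ?_
  have hinc : IsPolyLimit K fun z => (v (i + 1) - v i) * (z - v (i + 1))⁻¹ :=
    (IsPolyLimit.const K _).mul (IsPolyLimit.inv_sub_const hK (hv (i + 1)).1)
  refine hinc.comp_of_differentiableOn_ball (ρ := 1 / 2) differentiableOn_sqrt_one_add
    (by norm_num) fun z hz => ?_
  rw [← div_eq_mul_inv, norm_div]
  exact div_le_of_le_mul₀ (norm_nonneg _) (by norm_num) ((hv i).2 z hz)

lemma norm_div_sub_lt_one {a b : ℂ} (ha : ‖a - p‖ ≤ r) (hb : ‖b - p‖ ≤ r) (hz : 3 * r < ‖z - p‖) :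
    ‖(b - a) / (z - b)‖ < 1 := by
  have hzb : 2 * r < ‖z - b‖ := by linarith [norm_sub_le_norm_sub_add_norm_sub z b p]
  have hba : ‖b - a‖ ≤ 2 * r := by
    linarith [norm_sub_le_norm_sub_add_norm_sub b p a, norm_sub_rev p a]
  rw [norm_div, div_lt_one (by linarith [norm_nonneg (b - a)])]
  exact hba.trans_lt hzb

lemma chainSqrt_re_ne_zero (hv : ∀ i ≤ N, ‖v i - v 0‖ ≤ r) (hz : 3 * r < ‖z - v 0‖) :
    (chainSqrt v N z).re ≠ 0 := by
  intro hre
  have hr : 0 ≤ r := (norm_nonneg _).trans (hv 0 N.zero_le)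
  have hne (i : ℕ) (hi : i ≤ N) : z ≠ v i := by
    rintro rfl
    linarith [hv i hi]
  have hlt : ‖(v N - v 0) / (z - v N)‖ < 1 :=
    norm_div_sub_lt_one (hv 0 N.zero_le) (hv N le_rfl) hz
  have hsq : chainSqrt v N z ^ 2 = 1 + (v N - v 0) / (z - v N) := by
    rw [chainSqrt_sq hne, one_add_div (sub_ne_zero.2 (hne N le_rfl)), sub_add_sub_cancel]
  have hpos : 0 < (chainSqrt v N z ^ 2).re := by
    rw [hsq, Complex.add_re, Complex.one_re]
    linarith [neg_le_of_abs_le (Complex.abs_re_le_norm ((v N - v 0) / (z - v N)))]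
  rw [sq, Complex.mul_re, hre] at hpos
  nlinarith [sq_nonneg (chainSqrt v N z).im]

/-- Contracting the chain to its initial point deforms `chainSqrt v N z` to `1`, and the real part
never vanishes on the way. -/
lemma chainSqrt_re_pos (hv : ∀ i ≤ N, ‖v i - v 0‖ ≤ r) (hz : 3 * r < ‖z - v 0‖) :
    0 < (chainSqrt v N z).re := by
  let V (τ : ℝ) (i : ℕ) : ℂ := v 0 + τ * (v i - v 0)
  have hV {τ : ℝ} (hτ : τ ∈ Icc (0 : ℝ) 1) (i : ℕ) (hi : i ≤ N) : ‖V τ i - v 0‖ ≤ r := by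
    rw [add_sub_cancel_left, norm_mul, Complex.norm_real, Real.norm_of_nonneg hτ.1]
    exact (mul_le_of_le_one_left (norm_nonneg _) hτ.2).trans (hv i hi)
  have hV₀ (τ : ℝ) : V τ 0 = v 0 := by simp [V]
  have hVc (i : ℕ) : Continuous fun τ => V τ i := by fun_prop
  have hV₁ : V 1 = v := by ext i; simp [V]
  have hcont : ContinuousOn (fun τ => (chainSqrt (V τ) N z).re) (Icc 0 1) := by
    refine Complex.continuous_re.comp_continuousOn (continuousOn_finsetProd _ fun i hi τ hτ => ?_)
    have hi : i + 1 ≤ N := Finset.mem_range.1 hi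
    have hne : z - V τ (i + 1) ≠ 0 := by
      intro h
      have := hV hτ (i + 1) hi
      rw [← sub_eq_zero.1 h] at this
      linarith [norm_nonneg (z - v 0)]
    refine ContinuousAt.comp_continuousWithinAt (g := Complex.sqrt) (differentiableAt_sqrt
      (Complex.mem_slitPlane_of_norm_lt_one ?_)).continuousAt ?_
    · exact norm_div_sub_lt_one (hV hτ i (by lia)) (hV hτ (i + 1) hi) hz
    · exact (continuousAt_const.add (((hVc _).sub (hVc _)).continuousAt.div
        (continuous_const.sub (hVc _)).continuousAt hne)).continuousWithinAt
  have hne (τ : ℝ) (hτ : τ ∈ Icc (0 : ℝ) 1) : (chainSqrt (V τ) N z).re ≠ 0 :=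
    chainSqrt_re_ne_zero (by simpa only [hV₀] using hV hτ) (by rwa [hV₀])
  by_contra! hneg
  obtain ⟨τ, hτ, hτ0⟩ := intermediate_value_Icc' zero_le_one hcont
    (show (0 : ℝ) ∈ _ from ⟨by rwa [hV₁], by simp [V, chainSqrt]⟩)
  exact hne τ hτ hτ0

end ChainSqrt

section JoukowskiInverse

/-- The solution `w = (1 - s) / (1 + s)` of `z = (p + b) / 2 + (p - b) / 4 * (w + w⁻¹)`, where `s`
is a square root of `(z - p) / (z - b)`. It is written without dividing by `1 + s`. -/
noncomputable def joukowskiInv (p b s z : ℂ) : ℂ := (1 - s) ^ 2 * (z - b) / (p - b)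

variable {p b s z : ℂ}

lemma joukowskiInv_mul_one_add (hpb : p ≠ b) (hzb : z ≠ b) (hs : s ^ 2 = (z - p) / (z - b)) :
    joukowskiInv p b s z * (1 + s) = 1 - s := by
  rw [eq_div_iff (sub_ne_zero.2 hzb)] at hs
  rw [joukowskiInv, div_mul_eq_mul_div, div_eq_iff (sub_ne_zero.2 hpb)]
  linear_combination (-(1 - s)) * hs

lemma joukowskiInv_mul_sub (hpb : p ≠ b) (hzb : z ≠ b) (hs : s ^ 2 = (z - p) / (z - b)) :
    joukowskiInv p b s z * (z - (p + b) / 2) = (p - b) / 4 * (1 + joukowskiInv p b s z ^ 2) := by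
  set w := joukowskiInv p b s z
  have hw : w * (1 + s) = 1 - s := joukowskiInv_mul_one_add hpb hzb hs
  rw [eq_div_iff (sub_ne_zero.2 hzb)] at hs
  linear_combination (-w / 2 - (1 + w ^ 2) / 4) * hs - (z - b) / 4 * (w * (1 - s) - (1 + s)) * hw

lemma isPolyLimit_joukowskiInv {K : Set ℂ} [CompactSpace K] (p b : ℂ) {s : ℂ → ℂ}
    (hs : IsPolyLimit K s) : IsPolyLimit K fun z => joukowskiInv p b (s z) z := by
  have h1s := (IsPolyLimit.const K 1).add ((IsPolyLimit.const K (-1)).mul hs)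
  have hzb := (IsPolyLimit.id K).add (IsPolyLimit.const K (-b))
  refine ((h1s.mul h1s).mul (hzb.mul (IsPolyLimit.const K (p - b)⁻¹))).congr fun z _ => ?_
  simp only [joukowskiInv]
  ring

lemma norm_joukowskiInv_le_one (hpb : p ≠ b) (hzb : z ≠ b) (hs : s ^ 2 = (z - p) / (z - b))
    (hre : 0 ≤ s.re) : ‖joukowskiInv p b s z‖ ≤ 1 := by
  have hpos : 0 < ‖1 + s‖ :=
    (by simpa using hre.trans_lt (lt_one_add s.re) : 0 < (1 + s).re).trans_le (Complex.re_le_norm _)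
  have hle : ‖1 - s‖ ≤ ‖1 + s‖ := by
    rw [← sq_le_sq₀ (norm_nonneg _) (norm_nonneg _), ← Complex.normSq_eq_norm_sq,
      ← Complex.normSq_eq_norm_sq, Complex.normSq_sub, Complex.normSq_add]
    simp; linarith
  refine le_of_mul_le_mul_right ?_ hpos
  rwa [← norm_mul, joukowskiInv_mul_one_add hpb hzb hs, one_mul]

lemma norm_le_of_mul_eq_one_add_sq {w y κ : ℂ} {c : ℝ} (hκ : κ ≠ 0) (h : w * y = κ * (1 + w ^ 2))
    (hy : ‖y‖ ≤ c * ‖κ‖) : ‖w‖ ≤ c + 1 := by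
  have hκ' : 0 < ‖κ‖ := norm_pos_iff.2 hκ
  have hc : 0 ≤ c := nonneg_of_mul_nonneg_left ((norm_nonneg y).trans hy) hκ'
  have hquad : ‖w‖ ^ 2 ≤ c * ‖w‖ + 1 := by
    refine le_of_mul_le_mul_left ?_ hκ'
    calc ‖κ‖ * ‖w‖ ^ 2 = ‖w * y - κ‖ := by rw [h, ← norm_pow, ← norm_mul]; ring_nf
      _ ≤ ‖w‖ * ‖y‖ + ‖κ‖ := by rw [← norm_mul]; exact norm_sub_le _ _
      _ ≤ ‖w‖ * (c * ‖κ‖) + ‖κ‖ := by gcongr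
      _ = ‖κ‖ * (c * ‖w‖ + 1) := by ring
  nlinarith [norm_nonneg w]

end JoukowskiInverse

/-- Mergelyan's function: `h` is polynomially approximable on `K` and agrees with `1 / (z - m)` up
to an error of order `r ^ 2 / ‖z - m‖ ^ 3`, although `m` may lie in `K`. It is the inverse of a
Joukowski map attached to an arc of size `r` in the complement of `K`. -/
lemma exists_isPolyLimit_mul_sub_eq {K : Set ℂ} [CompactSpace K] (hK : IsConnected Kᶜ) {p : ℂ}
    (hp : p ∉ K) {r : ℝ} (hr : 0 < r) :
    ∃ (m κ : ℂ) (h : ℂ → ℂ), IsPolyLimit K h ∧ ‖m - p‖ ≤ r ∧ ‖κ‖ ≤ r ∧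
      ∀ z ∈ K, h z * (z - m) = 1 + κ ^ 2 * h z ^ 2 ∧ ‖h z‖ ≤ 300 / r ∧
        (4 * r ≤ ‖z - m‖ → ‖h z‖ ≤ 2 / ‖z - m‖) := by
  obtain ⟨N, v, rfl, hvN, hvr, hvK⟩ :=
    exists_chain_leaving_ball (isCompact_iff_compactSpace.2 inferInstance) hK hp hr
  set p := v 0
  set b := v N
  have hpb : p ≠ b := fun h => by rw [h, sub_self, norm_zero] at hvN; linarith
  set κ := (p - b) / 4
  set m := (p + b) / 2
  let w (z : ℂ) : ℂ := joukowskiInv p b (chainSqrt v N z) z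
  have hmp : ‖m - p‖ ≤ r / 2 := by
    rw [show m - p = (b - p) / 2 by simp only [m]; ring, norm_div, Complex.norm_two]
    linarith [hvr N le_rfl]
  have hκ : ‖κ‖ = ‖b - p‖ / 4 := by simp [κ, norm_sub_rev]
  have hκ₀ : κ ≠ 0 := div_ne_zero (sub_ne_zero.2 hpb) (by norm_num)
  have hw : IsPolyLimit K w :=
    isPolyLimit_joukowskiInv p b (isPolyLimit_chainSqrt hK.isPreconnected hvK)
  refine ⟨m, κ, fun z => κ⁻¹ * w z, (IsPolyLimit.const K _).mul hw, by linarith,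
    by linarith [hvr N le_rfl], fun z hz => ?_⟩
  have hzv (i : ℕ) : z ≠ v i := fun h => (hvK i).1 (h ▸ hz)
  have hs := chainSqrt_sq fun i (_ : i ≤ N) => hzv i
  have hwm : w z * (z - m) = κ * (1 + w z ^ 2) := joukowskiInv_mul_sub hpb (hzv N) hs
  have hhm : κ⁻¹ * w z * (z - m) = 1 + w z ^ 2 := by
    rw [mul_assoc, hwm, inv_mul_cancel_left₀ hκ₀]
  have hfar (hzp : 3 * r < ‖z - p‖) : ‖w z‖ ≤ 1 :=
    norm_joukowskiInv_le_one hpb (hzv N) hs (chainSqrt_re_pos hvr hzp).le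
  refine ⟨by rw [hhm]; field_simp, ?_, fun hzm => ?_⟩
  · have hw33 : ‖w z‖ ≤ 33 := by
      rcases lt_or_ge (3 * r) ‖z - p‖ with hzp | hzp
      · linarith [hfar hzp]
      · refine (norm_le_of_mul_eq_one_add_sq (c := 32) hκ₀ hwm ?_).trans (by norm_num)
        linarith [norm_sub_le_norm_sub_add_norm_sub z p m, norm_sub_rev m p]
    rw [norm_mul, norm_inv, inv_mul_le_iff₀ (norm_pos_iff.2 hκ₀), mul_div_assoc', le_div_iff₀ hr]
    nlinarith
  · have hw1 : ‖w z‖ ≤ 1 := hfar <| by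
      linarith [norm_sub_le_norm_sub_add_norm_sub z p m, norm_sub_rev m p]
    rw [le_div_iff₀ (by linarith), ← norm_mul, hhm]
    refine (norm_add_le _ _).trans ?_
    rw [norm_one, norm_pow]
    nlinarith [norm_nonneg (w z)]

section CauchyKernel

/-- An integrable majorant on the scale `δ` for the error made when the Cauchy kernel
`(z - ζ)⁻¹` is replaced by Mergelyan's function, as a function of `x = ‖z - ζ‖`. -/
noncomputable def decayKernel (δ x : ℝ) : ℝ := 1 / (x * (1 + x / δ) ^ 2)

lemma decayKernel_nonneg (δ : ℝ) {x : ℝ} (hx : 0 ≤ x) : 0 ≤ decayKernel δ x := by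
  unfold decayKernel; positivity

lemma smul_decayKernel {δ y : ℝ} (hy : 0 < y) :
    y ^ (Module.finrank ℝ ℂ - 1) • decayKernel δ y = 1 / (1 + y / δ) ^ 2 := by
  rw [Complex.finrank_real_complex, decayKernel, smul_eq_mul, pow_one, ← div_div,
    mul_div_assoc', mul_one_div_cancel hy.ne']

lemma integrableOn_Ioi_and_integral_one_div_sq {δ : ℝ} (hδ : 0 < δ) :
    IntegrableOn (fun y => 1 / (1 + y / δ) ^ 2) (Ioi 0) ∧
      ∫ y in Ioi 0, 1 / (1 + y / δ) ^ 2 = δ := by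
  have hderiv (y : ℝ) (hy : y ∈ Ici 0) :
      HasDerivAt (fun y => -δ / (1 + y / δ)) (1 / (1 + y / δ) ^ 2) y := by
    have hy' : (0 : ℝ) ≤ y := hy
    have hden : HasDerivAt (fun y : ℝ => 1 + y / δ) (1 / δ) y :=
      ((hasDerivAt_id y).div_const δ).const_add 1
    refine ((hasDerivAt_const y (-δ)).div hden (by positivity)).congr_deriv ?_
    field_simp
    ring
  have hlim : Tendsto (fun y => -δ / (1 + y / δ)) atTop (𝓝 0) :=
    (tendsto_atTop_add_const_left _ _ (tendsto_id.atTop_div_const hδ)).const_div_atTop _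
  have hpos (y : ℝ) (_ : y ∈ Ioi 0) : 0 ≤ 1 / (1 + y / δ) ^ 2 := by positivity
  exact ⟨integrableOn_Ioi_deriv_of_nonneg' hderiv hpos hlim, by
    simpa using integral_Ioi_of_hasDerivAt_of_nonneg' hderiv hpos hlim⟩

lemma integrable_decayKernel {δ : ℝ} (hδ : 0 < δ) :
    Integrable fun ζ : ℂ => decayKernel δ ‖ζ‖ := by
  rw [integrable_fun_norm_addHaar volume (f := decayKernel δ)]
  exact (integrableOn_congr_fun (fun y hy => smul_decayKernel hy) measurableSet_Ioi).2
    (integrableOn_Ioi_and_integral_one_div_sq hδ).1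

lemma integral_decayKernel {δ : ℝ} (hδ : 0 < δ) :
    ∫ ζ : ℂ, decayKernel δ ‖ζ‖ = 2 * Real.pi * δ := by
  rw [integral_fun_norm_addHaar volume (decayKernel δ),
    setIntegral_congr_fun measurableSet_Ioi fun y hy => smul_decayKernel hy,
    (integrableOn_Ioi_and_integral_one_div_sq hδ).2]
  simp [Measure.real, Complex.volume_ball, mul_assoc]

lemma norm_inv_sub_sub_le {y t h κ : ℂ} {δ : ℝ} (hδ : 0 < δ) (ht : ‖t‖ ≤ 12 * δ) (hκ : ‖κ‖ ≤ δ)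
    (heq : h * y = 1 + κ ^ 2 * h ^ 2) (hyt : 24 * δ ≤ ‖y - t‖) (hh : ‖h‖ ≤ 2 / ‖y‖) :
    ‖(y - t)⁻¹ - (h + t * h ^ 2)‖ ≤ 704 * δ ^ 2 / ‖y - t‖ ^ 3 := by
  have hD : 0 < ‖y - t‖ := by linarith
  have hy : ‖y - t‖ / 2 ≤ ‖y‖ := by linarith [norm_sub_le y t]
  have hy₀ : y ≠ 0 := norm_pos_iff.1 (by linarith)
  have hyt₀ : y - t ≠ 0 := norm_pos_iff.1 hD
  set D := ‖y - t‖
  have hyinv : ‖y⁻¹‖ ≤ 2 / D := by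
    rw [norm_inv, ← inv_div]
    gcongr
  have hhD : ‖h‖ ≤ 4 / D := by
    rw [div_eq_mul_inv, ← norm_inv] at hh
    exact hh.trans ((mul_le_mul_of_nonneg_left hyinv zero_le_two).trans_eq (by ring))
  have hdiff : ‖h - y⁻¹‖ ≤ δ ^ 2 * (4 / D) ^ 2 * (2 / D) := by
    have : h - y⁻¹ = κ ^ 2 * h ^ 2 * y⁻¹ := by
      field_simp
      linear_combination heq
    rw [this, norm_mul, norm_mul, norm_pow, norm_pow]
    gcongr
  have hdecomp : (y - t)⁻¹ - (h + t * h ^ 2) =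
      t ^ 2 * y⁻¹ ^ 2 * (y - t)⁻¹ - (h - y⁻¹) - t * ((h - y⁻¹) * (h + y⁻¹)) := by
    field_simp
    ring
  calc ‖(y - t)⁻¹ - (h + t * h ^ 2)‖
      ≤ ‖t‖ ^ 2 * ‖y⁻¹‖ ^ 2 * ‖(y - t)⁻¹‖ + ‖h - y⁻¹‖ + ‖t‖ * (‖h - y⁻¹‖ * (‖h‖ + ‖y⁻¹‖)) := by
        rw [hdecomp]
        refine (norm_sub_le _ _).trans (add_le_add ((norm_sub_le _ _).trans_eq ?_) ?_)
        · simp only [norm_mul, norm_pow]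
        · rw [norm_mul, norm_mul]
          gcongr
          exact norm_add_le _ _
    _ ≤ (12 * δ) ^ 2 * (2 / D) ^ 2 * D⁻¹ + δ ^ 2 * (4 / D) ^ 2 * (2 / D) +
          D / 2 * (δ ^ 2 * (4 / D) ^ 2 * (2 / D) * (4 / D + 2 / D)) := by
        gcongr
        · exact (norm_inv _).le
        · linarith
    _ = 704 * δ ^ 2 / D ^ 3 := by
        field_simp
        norm_num

lemma div_pow_three_le_decayKernel {δ D : ℝ} (hδ : 0 < δ) (hD : δ ≤ D) :
    δ ^ 2 / D ^ 3 ≤ 4 * decayKernel δ D := by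
  have hD₀ : 0 < D := hδ.trans_le hD
  have hle : 1 + D / δ ≤ 2 * (D / δ) := by linarith [(one_le_div hδ).2 hD]
  calc δ ^ 2 / D ^ 3 = 4 * (1 / (D * (2 * (D / δ)) ^ 2)) := by field_simp; norm_num
    _ ≤ 4 * decayKernel δ D := by unfold decayKernel; gcongr

lemma one_div_le_decayKernel {δ D c : ℝ} (hδ : 0 < δ) (hD : 0 < D) (hDc : D ≤ c * δ) :
    1 / D ≤ (1 + c) ^ 2 * decayKernel δ D := by
  have hle : D / δ ≤ c := (div_le_iff₀ hδ).2 hDc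
  have h1c : 0 < 1 + c := by linarith [div_pos hD hδ]
  calc 1 / D = (1 + c) ^ 2 * (1 / (D * (1 + c) ^ 2)) := by field_simp
    _ ≤ (1 + c) ^ 2 * decayKernel δ D := by unfold decayKernel; gcongr

/-- The value of the constant is irrelevant, but it must not depend on `K` and `δ`. -/
lemma exists_isPolyLimit_norm_inv_sub_le {K : Set ℂ} [CompactSpace K] (hK : IsConnected Kᶜ) {δ : ℝ}
    (hδ : 0 < δ) {p ζ₀ : ℂ} (hp : p ∉ K) (hpζ₀ : ‖p - ζ₀‖ ≤ 10 * δ) :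
    ∃ a b : ℂ → ℂ, IsPolyLimit K a ∧ IsPolyLimit K b ∧ ∀ ζ, ‖ζ - ζ₀‖ ≤ δ → ∀ z ∈ K, z ≠ ζ →
      ‖(z - ζ)⁻¹ - (a z + ζ * b z)‖ ≤ 2 * 10 ^ 10 * decayKernel δ ‖z - ζ‖ := by
  obtain ⟨m, κ, h, hh, hm, hκ, H⟩ := exists_isPolyLimit_mul_sub_eq hK hp hδ
  refine ⟨fun z => h z + -m * (h z * h z), fun z => h z * h z,
    hh.add ((IsPolyLimit.const K _).mul (hh.mul hh)), hh.mul hh, fun ζ hζ z hz hne => ?_⟩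
  obtain ⟨heq, hbound, hfar⟩ := H z hz
  have ht : ‖ζ - m‖ ≤ 12 * δ := by
    linarith [norm_sub_le_norm_sub_add_norm_sub ζ ζ₀ m, norm_sub_le_norm_sub_add_norm_sub ζ₀ p m,
      norm_sub_rev ζ₀ p, norm_sub_rev p m]
  have hD₀ : 0 < ‖z - ζ‖ := norm_pos_iff.2 (sub_ne_zero.2 hne)
  have hk := decayKernel_nonneg δ hD₀.le
  have hsub : z - m - (ζ - m) = z - ζ := by ring
  rw [show h z + -m * (h z * h z) + ζ * (h z * h z) = h z + (ζ - m) * h z ^ 2 by ring]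
  rcases le_or_gt (24 * δ) ‖z - ζ‖ with hD | hD
  · have hzm : 4 * δ ≤ ‖z - m‖ := by
      linarith [norm_sub_le_norm_sub_add_norm_sub z m ζ, norm_sub_rev m ζ]
    have hle := norm_inv_sub_sub_le hδ ht hκ heq (by rwa [hsub]) (hfar hzm)
    rw [hsub, mul_div_assoc] at hle
    linarith [div_pow_three_le_decayKernel hδ (by linarith : δ ≤ ‖z - ζ‖)]
  · have hle : ‖(z - ζ)⁻¹ - (h z + (ζ - m) * h z ^ 2)‖ ≤
        1 / ‖z - ζ‖ + (300 / δ + 12 * δ * (300 / δ) ^ 2) := by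
      refine (norm_sub_le _ _).trans (add_le_add (by rw [norm_inv, one_div])
        ((norm_add_le _ _).trans (add_le_add hbound ?_)))
      rw [norm_mul, norm_pow]
      gcongr
    have hδD : 1 / δ ≤ 24 * (1 / ‖z - ζ‖) := by
      rw [mul_one_div, div_le_div_iff₀ hδ hD₀]
      linarith
    have hconst : 300 / δ + 12 * δ * (300 / δ) ^ 2 = 1080300 * (1 / δ) := by
      field_simp
      norm_num
    linarith [one_div_le_decayKernel hδ hD₀ hD.le]

lemma exists_isPolyLimit_eventually_norm_inv_sub_lt {K : Set ℂ} [CompactSpace K]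
    (hK : IsPreconnected Kᶜ) {ζ₀ : ℂ} (hζ₀ : ζ₀ ∉ K) {τ : ℝ} (hτ : 0 < τ) :
    ∃ a : ℂ → ℂ, IsPolyLimit K a ∧ ∀ᶠ ζ in 𝓝 ζ₀, ∀ z ∈ K, ‖(z - ζ)⁻¹ - a z‖ < τ := by
  refine ⟨_, IsPolyLimit.inv_sub_const hK hζ₀, (isCompact_iff_compactSpace.2
    inferInstance).eventually_forall_of_forall_eventually fun z hz => ?_⟩
  have hne : z - ζ₀ ≠ 0 := sub_ne_zero.2 fun h => hζ₀ (h ▸ hz)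
  have hcont : ContinuousAt (fun x : ℂ × ℂ => ‖(x.2 - x.1)⁻¹ - (x.2 - ζ₀)⁻¹‖) (ζ₀, z) := by
    fun_prop (disch := exact hne)
  exact hcont.eventually_lt_const (by simpa using hτ)

end CauchyKernel

section CauchyPompeiu

variable {E : Type*} [NormedAddCommGroup E] [NormedSpace ℂ E]

/-- Twice the Wirtinger derivative `∂F/∂ζ̄`; it vanishes where `F` is holomorphic and measures the
failure of the Cauchy integral formula. -/
noncomputable def dbar (F : ℂ → E) (ζ : ℂ) : E := fderiv ℝ F ζ 1 + I • fderiv ℝ F ζ I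

lemma continuous_dbar {F : ℂ → E} (hF : ContDiff ℝ 1 F) : Continuous (dbar F) := by
  have : Continuous (fderiv ℝ F) := hF.continuous_fderiv one_ne_zero
  unfold dbar
  fun_prop

lemma dbar_eq_zero_of_differentiableAt {F : ℂ → E} {z : ℂ} (h : DifferentiableAt ℂ F z) :
    dbar F z = 0 := by
  have hI : fderiv ℂ F z I = I • fderiv ℂ F z 1 := by
    rw [← map_smul, smul_eq_mul, mul_one]
  rw [dbar, h.fderiv_restrictScalars ℝ, ContinuousLinearMap.coe_restrictScalars', hI, smul_smul,
    Complex.I_mul_I, neg_one_smul, add_neg_cancel]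

lemma support_dbar_subset (F : ℂ → E) : Function.support (dbar F) ⊆ tsupport F := fun ζ hζ =>
  support_fderiv_subset ℝ fun h => hζ (by simp [dbar, h])

lemma fderiv_add_I_smul_fderiv_I_mul (F : ℂ → E) (z w : ℂ) :
    fderiv ℝ F z w + I • fderiv ℝ F z (I * w) = conj w • dbar F z := by
  have hlin (v : ℂ) :
      fderiv ℝ F z v = (v.re : ℂ) • fderiv ℝ F z 1 + (v.im : ℂ) • fderiv ℝ F z I := by
    conv_lhs => rw [show v = v.re • (1 : ℂ) + v.im • I by simp]
    simp only [map_add, map_smul, Complex.coe_smul]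
  have hconj : conj w = w.re - w.im * I := by apply Complex.ext <;> simp
  rw [hlin w, hlin (I * w), dbar, hconj, Complex.I_mul_re, Complex.I_mul_im, Complex.ofReal_neg]
  linear_combination (norm := module) (w.im : ℂ) • congrArg (· • fderiv ℝ F z I) Complex.I_mul_I

lemma smul_inv_smul_dbar_mul (F : ℂ → E) {r : ℝ} (hr : r ≠ 0) {w : ℂ} (hw : ‖w‖ = 1) :
    r • ((r * w)⁻¹ • dbar F (r * w)) =
      fderiv ℝ F (r * w) w + I • fderiv ℝ F (r * w) (I * w) := by
  have hr' : (r : ℂ) ≠ 0 := Complex.ofReal_ne_zero.2 hr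
  rw [fderiv_add_I_smul_fderiv_I_mul, ← Complex.inv_eq_conj hw, ← Complex.coe_smul, smul_smul,
    mul_inv, mul_inv_cancel_left₀ hr']

variable [CompleteSpace E] {F : ℂ → E}

lemma integral_fderiv_mul_apply (hF : ContDiff ℝ 1 F) {R : ℝ} (hR : 0 ≤ R) (w : ℂ) :
    ∫ r in Ioc 0 R, fderiv ℝ F (r * w) w = F (R * w) - F 0 := by
  have : Continuous (fderiv ℝ F) := hF.continuous_fderiv one_ne_zero
  have hderiv (r : ℝ) : HasDerivAt (fun r : ℝ => F (r * w)) (fderiv ℝ F (r * w) w) r := by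
    have hline : HasDerivAt (fun r : ℝ => (r : ℂ) * w) w r := by
      simpa using (hasDerivAt_id r).ofReal_comp.mul_const w
    exact (hF.differentiable one_ne_zero _).hasFDerivAt.comp_hasDerivAt r hline
  rw [← intervalIntegral.integral_of_le hR,
    intervalIntegral.integral_eq_sub_of_hasDerivAt (fun r _ => hderiv r)
      (Continuous.intervalIntegrable (by fun_prop) _ _)]
  simp

lemma integral_fderiv_mul_exp_apply (hF : ContDiff ℝ 1 F) {r : ℝ} (hr : r ≠ 0) :
    ∫ θ in Ioo (-π) π, fderiv ℝ F (r * exp (θ * I)) (I * exp (θ * I)) = 0 := by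
  have : Continuous (fderiv ℝ F) := hF.continuous_fderiv one_ne_zero
  have hderiv (θ : ℝ) : HasDerivAt (fun θ : ℝ => r⁻¹ • F (r * exp (θ * I)))
      (fderiv ℝ F (r * exp (θ * I)) (I * exp (θ * I))) θ := by
    have hcircle : HasDerivAt (fun θ : ℝ => (r : ℂ) * exp (θ * I))
        (r • (I * exp (θ * I))) θ :=
      (((hasDerivAt_id θ).ofReal_comp.mul_const I).cexp.const_mul (r : ℂ)).congr_deriv (by
        simp [mul_comm])
    refine (((hF.differentiable one_ne_zero _).hasFDerivAt.comp_hasDerivAt θ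
      hcircle).const_smul r⁻¹).congr_deriv ?_
    rw [map_smul, inv_smul_smul₀ hr]
  rw [← integral_Ioc_eq_integral_Ioo,
    ← intervalIntegral.integral_of_le (neg_le_self Real.pi_pos.le),
    intervalIntegral.integral_eq_sub_of_hasDerivAt (fun θ _ => hderiv θ)
      (Continuous.intervalIntegrable (by fun_prop) _ _), sub_eq_zero,
    Complex.ofReal_neg, neg_mul, Complex.exp_neg, Complex.exp_pi_mul_I, inv_neg, inv_one]

lemma integral_fderiv_polar_apply_radial (hF : ContDiff ℝ 1 F) {R : ℝ} (hR : 0 ≤ R)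
    (hFR : ∀ z, ‖z‖ = R → F z = 0) :
    ∫ p in Ioc 0 R ×ˢ Ioo (-π) π, fderiv ℝ F (p.1 * exp (p.2 * I)) (exp (p.2 * I)) =
      -(2 * π : ℂ) • F 0 := by
  have : Continuous (fderiv ℝ F) := hF.continuous_fderiv one_ne_zero
  have hint : IntegrableOn (fun p : ℝ × ℝ => fderiv ℝ F (p.2 * exp (p.1 * I)) (exp (p.1 * I)))
      (Ioo (-π) π ×ˢ Ioc 0 R) :=
    ((by fun_prop : Continuous _).continuousOn.integrableOn_compact
      (isCompact_Icc.prod isCompact_Icc)).mono_set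
      (prod_mono Ioo_subset_Icc_self Ioc_subset_Icc_self)
  have hzero (θ : ℝ) : F (R * exp (θ * I)) = 0 := hFR _ (by
    simp [Complex.norm_exp_ofReal_mul_I, abs_of_nonneg hR])
  rw [Measure.volume_eq_prod, ← setIntegral_prod_swap]
  refine (setIntegral_prod _ hint).trans ?_
  simp only [integral_fderiv_mul_apply hF hR, hzero, zero_sub, setIntegral_const,
    Real.volume_real_Ioo_of_le (neg_le_self Real.pi_pos.le), sub_neg_eq_add, ← two_mul, smul_neg,
    neg_smul, ← Complex.coe_smul, Complex.ofReal_mul, Complex.ofReal_ofNat]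

lemma integral_fderiv_polar_apply_angular (hF : ContDiff ℝ 1 F) (R : ℝ) :
    ∫ p in Ioc 0 R ×ˢ Ioo (-π) π, fderiv ℝ F (p.1 * exp (p.2 * I)) (I * exp (p.2 * I)) = 0 := by
  have : Continuous (fderiv ℝ F) := hF.continuous_fderiv one_ne_zero
  have hint : IntegrableOn
      (fun p : ℝ × ℝ => fderiv ℝ F (p.1 * exp (p.2 * I)) (I * exp (p.2 * I)))
      (Ioc 0 R ×ˢ Ioo (-π) π) :=
    ((by fun_prop : Continuous _).continuousOn.integrableOn_compact
      (isCompact_Icc.prod isCompact_Icc)).mono_set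
      (prod_mono Ioc_subset_Icc_self Ioo_subset_Icc_self)
  rw [Measure.volume_eq_prod, setIntegral_prod _ hint]
  exact setIntegral_eq_zero_of_forall_eq_zero fun r hr =>
    integral_fderiv_mul_exp_apply hF hr.1.ne'

lemma integral_inv_smul_dbar (hF : ContDiff ℝ 1 F) (hFc : HasCompactSupport F) :
    ∫ ζ, ζ⁻¹ • dbar F ζ = -(2 * π : ℂ) • F 0 := by
  have : Continuous (fderiv ℝ F) := hF.continuous_fderiv one_ne_zero
  obtain ⟨R, hR₀, hR⟩ := hFc.isCompact.isBounded.subset_ball_lt 0 (0 : ℂ)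
  have hnot {z : ℂ} (hz : R ≤ ‖z‖) : z ∉ tsupport F := fun h =>
    hz.not_gt (mem_ball_zero_iff.1 (hR h))
  have hset : Ioc 0 R ×ˢ Ioo (-π) π ⊆ Ioi 0 ×ˢ Ioo (-π) π :=
    prod_mono Ioc_subset_Ioi_self Subset.rfl
  have hout (p : ℝ × ℝ) (hp : p ∈ (Ioi 0 ×ˢ Ioo (-π) π) \ (Ioc 0 R ×ˢ Ioo (-π) π)) :
      p.1 • ((Complex.polarCoord.symm p)⁻¹ • dbar F (Complex.polarCoord.symm p)) = 0 := by
    have hp₁ : R < p.1 := lt_of_not_ge fun h => hp.2 ⟨⟨hp.1.1, h⟩, hp.1.2⟩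
    have hsupp : Complex.polarCoord.symm p ∉ Function.support (dbar F) := fun h =>
      hnot ((hp₁.le.trans (le_abs_self _)).trans_eq (Complex.norm_polarCoord_symm p).symm)
        (support_dbar_subset F h)
    rw [Function.notMem_support.1 hsupp, smul_zero, smul_zero]
  have hpolar (p : ℝ × ℝ) (hp : p ∈ Ioc 0 R ×ˢ Ioo (-π) π) :
      p.1 • ((Complex.polarCoord.symm p)⁻¹ • dbar F (Complex.polarCoord.symm p)) =
        fderiv ℝ F (p.1 * exp (p.2 * I)) (exp (p.2 * I)) +
          I • fderiv ℝ F (p.1 * exp (p.2 * I)) (I * exp (p.2 * I)) := by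
    rw [← smul_inv_smul_dbar_mul F hp.1.1.ne' (Complex.norm_exp_ofReal_mul_I _),
      Complex.exp_mul_I, Complex.polarCoord_symm_apply]
    simp only [Complex.ofReal_cos, Complex.ofReal_sin]
  have hint {G : ℝ × ℝ → E} (hG : Continuous G) : IntegrableOn G (Ioc 0 R ×ˢ Ioo (-π) π) :=
    (hG.continuousOn.integrableOn_compact (isCompact_Icc.prod isCompact_Icc)).mono_set
      (prod_mono Ioc_subset_Icc_self Ioo_subset_Icc_self)
  rw [← Complex.integral_comp_polarCoord_symm, polarCoord_target,
    setIntegral_eq_of_subset_of_forall_sdiff_eq_zero (measurableSet_Ioi.prod measurableSet_Ioo)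
      hset hout, setIntegral_congr_fun (measurableSet_Ioc.prod measurableSet_Ioo) hpolar,
    integral_add (hint (by fun_prop)) (hint (by fun_prop)), integral_smul,
    integral_fderiv_polar_apply_radial hF hR₀.le fun z hz =>
      image_eq_zero_of_notMem_tsupport (hnot hz.ge),
    integral_fderiv_polar_apply_angular hF, smul_zero, add_zero]

theorem integral_inv_sub_smul_dbar (hF : ContDiff ℝ 1 F) (hFc : HasCompactSupport F) (z : ℂ) :
    ∫ ζ, (z - ζ)⁻¹ • dbar F ζ = (2 * π : ℂ) • F z := by
  have htrans := integral_inv_smul_dbar (F := fun w => F (w + z)) (by fun_prop)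
    (hFc.comp_homeomorph (Homeomorph.addRight z))
  have hdbar (w : ℂ) : dbar (fun w => F (w + z)) w = dbar F (w + z) := by
    simp only [dbar, fderiv_comp_add_right]
  simp only [hdbar, zero_add] at htrans
  rw [← integral_add_right_eq_self _ z]
  simp only [sub_add_cancel_right, inv_neg, neg_smul, integral_neg, htrans, neg_neg]

end CauchyPompeiu

section BumpPartition

variable {E : Type*} [NormedAddCommGroup E] [NormedSpace ℂ E]

lemma dbar_sum {ι : Type*} (s : Finset ι) {G : ι → ℂ → E} {ζ : ℂ}
    (hG : ∀ i ∈ s, DifferentiableAt ℝ (G i) ζ) :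
    dbar (fun z => ∑ i ∈ s, G i z) ζ = ∑ i ∈ s, dbar (G i) ζ := by
  simp only [dbar, fderiv_fun_sum hG, sum_apply, Finset.smul_sum,
    Finset.sum_add_distrib]

lemma dbar_smul {u : ℂ → ℂ} {G : ℂ → E} {ζ : ℂ} (hu : DifferentiableAt ℝ u ζ)
    (hG : DifferentiableAt ℝ G ζ) :
    dbar (fun z => u z • G z) ζ = dbar u ζ • G ζ + u ζ • dbar G ζ := by
  simp only [dbar, fderiv_fun_smul hu hG, add_apply,
    smul_apply, ContinuousLinearMap.smulRight_apply, smul_eq_mul]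
  module

lemma dbar_smul_of_tsupport {u : ℂ → ℂ} {G : ℂ → E} (hu : Differentiable ℝ u)
    (hG : ∀ ζ ∈ tsupport u, DifferentiableAt ℂ G ζ) (ζ : ℂ) :
    dbar (fun z => u z • G z) ζ = dbar u ζ • G ζ := by
  by_cases hζ : ζ ∈ tsupport u
  · rw [dbar_smul (hu ζ) ((hG ζ hζ).restrictScalars ℝ),
      dbar_eq_zero_of_differentiableAt (hG ζ hζ), smul_zero, add_zero]
  · have hzero : dbar u ζ = 0 :=
      Function.notMem_support.1 fun h => hζ (support_dbar_subset u h)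
    rw [hzero, zero_smul]
    exact Function.notMem_support.1 fun h =>
      hζ (tsupport_smul_subset_left u G (support_dbar_subset _ h))

/-- A finite smooth partition of unity on `U` at scale `δ`: each bump lives in a disc of radius
`2 * δ` about its center, and `C / δ` bounds the sum of the `∂/∂ζ̄` derivatives. -/
structure BumpPartition (δ C : ℝ) (U : Set ℂ) where
  index : Finset (ℕ × ℕ)
  center : ℕ × ℕ → ℂ
  bump : ℕ × ℕ → ℂ → ℝ
  contDiff_bump (j : ℕ × ℕ) : ContDiff ℝ 1 (bump j)
  bump_nonneg (j : ℕ × ℕ) (z : ℂ) : 0 ≤ bump j z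
  tsupport_bump_subset (j : ℕ × ℕ) : tsupport (bump j) ⊆ closedBall (center j) (2 * δ)
  sum_bump_eq_one (z : ℂ) (hz : z ∈ U) : ∑ j ∈ index, bump j z = 1
  sum_norm_dbar_bump_le (ζ : ℂ) : ∑ j ∈ index, ‖dbar (fun z => (bump j z : ℂ)) ζ‖ ≤ C / δ

/-- A smooth bump on `[-1, 1]` whose integer translates add up to `1`. -/
noncomputable def unitBump (x : ℝ) : ℝ := Real.smoothTransition (x + 1) - Real.smoothTransition x

lemma unitBump_nonneg (x : ℝ) : 0 ≤ unitBump x :=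
  sub_nonneg.2 (Real.smoothTransition.monotone (by linarith))

lemma contDiff_unitBump : ContDiff ℝ 1 unitBump :=
  (Real.smoothTransition.contDiff.comp (contDiff_id.add contDiff_const)).sub
    Real.smoothTransition.contDiff

lemma support_unitBump_subset : Function.support unitBump ⊆ Icc (-1) 1 := by
  intro x hx
  by_contra hcon
  refine hx (sub_eq_zero.2 ?_)
  rcases lt_or_ge x (-1) with h | h
  · rw [Real.smoothTransition.zero_of_nonpos (by linarith),
      Real.smoothTransition.zero_of_nonpos (by linarith)]
  · have h' : 1 < x := lt_of_not_ge fun h' => hcon ⟨h, h'⟩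
    rw [Real.smoothTransition.one_of_one_le (by linarith),
      Real.smoothTransition.one_of_one_le h'.le]

lemma sum_unitBump {N : ℕ} {x : ℝ} (hx : |x| ≤ N) :
    ∑ k ∈ Finset.range (2 * N + 1), unitBump (x - (k - N)) = 1 := by
  have htelescope :=
    Finset.sum_range_sub' (fun k : ℕ => Real.smoothTransition (x - (k - N) + 1)) (2 * N + 1)
  rw [abs_le] at hx
  rw [Real.smoothTransition.one_of_one_le (by push_cast; linarith),
    Real.smoothTransition.zero_of_nonpos (by push_cast; linarith), sub_zero] at htelescope
  rw [← htelescope]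
  refine Finset.sum_congr rfl fun k _ => ?_
  rw [unitBump]
  congr 2
  push_cast
  ring

/-- The product bump on the square `[-1, 1] × [-1, 1]`. -/
noncomputable def squareBump (z : ℂ) : ℝ := unitBump z.re * unitBump z.im

lemma contDiff_squareBump : ContDiff ℝ 1 squareBump :=
  (contDiff_unitBump.comp Complex.reCLM.contDiff).mul
    (contDiff_unitBump.comp Complex.imCLM.contDiff)

lemma tsupport_squareBump_subset : tsupport squareBump ⊆ Icc (-1) 1 ×ℂ Icc (-1) 1 :=
  closure_minimal (fun _ hz => ⟨support_unitBump_subset (left_ne_zero_of_mul hz),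
    support_unitBump_subset (right_ne_zero_of_mul hz)⟩) (isClosed_Icc.reProdIm isClosed_Icc)

lemma exists_norm_dbar_squareBump_le :
    ∃ C, 0 ≤ C ∧ ∀ ζ, ‖dbar (fun z => (squareBump z : ℂ)) ζ‖ ≤ C := by
  have hsmooth : ContDiff ℝ 1 fun z => (squareBump z : ℂ) :=
    Complex.ofRealCLM.contDiff.comp contDiff_squareBump
  have hcompact : HasCompactSupport squareBump :=
    (isCompact_Icc.reProdIm isCompact_Icc).of_isClosed_subset (isClosed_tsupport _)
      tsupport_squareBump_subset
  have hcompact' : HasCompactSupport (dbar fun z => (squareBump z : ℂ)) :=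
    (hcompact.comp_left (g := ((↑) : ℝ → ℂ)) Complex.ofReal_zero).mono'
      (support_dbar_subset _)
  obtain ⟨C, hC⟩ := hcompact'.exists_bound_of_continuous (continuous_dbar hsmooth)
  exact ⟨C, (norm_nonneg _).trans (hC 0), hC⟩

lemma card_filter_sub_mem_Icc_le (s : Finset ℕ) (y : ℝ) :
    (s.filter fun k : ℕ => y - k ∈ Icc (-1) 1).card ≤ 3 := by
  have hmaps (k : ℕ) (hk : k ∈ s.filter fun k : ℕ => y - k ∈ Icc (-1) 1) :
      (k : ℤ) ∈ Finset.Icc ⌈y - 1⌉ (⌈y - 1⌉ + 2) := by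
    have hk' := (Finset.mem_filter.1 hk).2
    have hlt : ((k : ℤ) : ℝ) < (⌈y - 1⌉ + 3 : ℤ) := by
      push_cast
      linarith [hk'.1, Int.le_ceil (y - 1)]
    refine Finset.mem_Icc.2 ⟨Int.ceil_le.2 ?_, by linarith [Int.cast_lt.1 hlt]⟩
    push_cast
    linarith [hk'.2]
  refine (Finset.card_le_card_of_injOn _ hmaps Nat.cast_injective.injOn).trans_eq ?_
  rw [Int.card_Icc]
  omega

/-- The point of `ℤ[i]` with index `j`, shifted so that the indices in
`{0, …, 2 * N} × {0, …, 2 * N}` surround the origin. -/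
noncomputable def gridPoint (N : ℕ) (j : ℕ × ℕ) : ℂ := ⟨j.1 - N, j.2 - N⟩

/-- The translate of `squareBump` to the grid point `j`, rescaled to mesh size `δ`. -/
noncomputable def gridBump (δ : ℝ) (N : ℕ) (j : ℕ × ℕ) (z : ℂ) : ℝ :=
  squareBump (δ⁻¹ • z - gridPoint N j)

lemma sub_gridPoint_mem_of_mem_tsupport_gridBump {δ : ℝ} {N : ℕ} {j : ℕ × ℕ} {z : ℂ}
    (hz : z ∈ tsupport (gridBump δ N j)) :
    δ⁻¹ • z - gridPoint N j ∈ Icc (-1) 1 ×ℂ Icc (-1) 1 :=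
  tsupport_squareBump_subset (tsupport_comp_subset_preimage squareBump
    (f := fun z : ℂ => δ⁻¹ • z - gridPoint N j) (by fun_prop) hz)

lemma tsupport_gridBump_subset {δ : ℝ} (hδ : 0 < δ) (N : ℕ) (j : ℕ × ℕ) :
    tsupport (gridBump δ N j) ⊆ closedBall (δ • gridPoint N j) (2 * δ) := by
  intro z hz
  obtain ⟨hre, him⟩ := sub_gridPoint_mem_of_mem_tsupport_gridBump hz
  rw [mem_preimage, mem_Icc, ← abs_le] at hre him
  have hnorm : ‖δ⁻¹ • z - gridPoint N j‖ ≤ 2 :=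
    (Complex.norm_le_abs_re_add_abs_im _).trans (by linarith)
  rw [mem_closedBall_iff_norm]
  calc ‖z - δ • gridPoint N j‖ = ‖δ • (δ⁻¹ • z - gridPoint N j)‖ := by
        rw [smul_sub, smul_inv_smul₀ hδ.ne']
    _ = ‖δ⁻¹ • z - gridPoint N j‖ * δ := by
        rw [norm_smul, Real.norm_of_nonneg hδ.le, mul_comm]
    _ ≤ 2 * δ := by gcongr

lemma sum_gridBump_eq_one {δ : ℝ} (hδ : 0 < δ) {N : ℕ} {z : ℂ} (hz : ‖z‖ ≤ δ * N) :
    ∑ j ∈ Finset.range (2 * N + 1) ×ˢ Finset.range (2 * N + 1), gridBump δ N j z = 1 := by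
  have hscale {x : ℝ} (hx : |x| ≤ ‖z‖) : |δ⁻¹ * x| ≤ N := by
    rw [abs_mul, abs_of_pos (inv_pos.2 hδ), inv_mul_le_iff₀ hδ]
    exact hx.trans hz
  simp only [Finset.sum_product, gridBump, squareBump, gridPoint, Complex.sub_re,
    Complex.sub_im, Complex.smul_re, Complex.smul_im, smul_eq_mul, ← Finset.mul_sum,
    sum_unitBump (hscale (Complex.abs_im_le_norm z)), mul_one,
    sum_unitBump (hscale (Complex.abs_re_le_norm z))]

lemma dbar_gridBump (δ : ℝ) (N : ℕ) (j : ℕ × ℕ) (ζ : ℂ) :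
    dbar (fun z => (gridBump δ N j z : ℂ)) ζ =
      δ⁻¹ • dbar (fun z => (squareBump z : ℂ)) (δ⁻¹ • ζ - gridPoint N j) := by
  have hfderiv : fderiv ℝ (fun z => (gridBump δ N j z : ℂ)) ζ =
      δ⁻¹ • fderiv ℝ (fun z => (squareBump z : ℂ)) (δ⁻¹ • ζ - gridPoint N j) :=
    (fderiv_comp_smul (f := fun w => (squareBump (w - gridPoint N j) : ℂ)) δ⁻¹).trans
      (congrArg _ (fderiv_comp_sub (f := fun z => (squareBump z : ℂ)) (gridPoint N j)))
  simp only [dbar, hfderiv, smul_apply, smul_add, smul_comm I]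

lemma sum_norm_dbar_gridBump_le {δ C : ℝ} (hδ : 0 < δ) (hC₀ : 0 ≤ C)
    (hC : ∀ ζ, ‖dbar (fun z => (squareBump z : ℂ)) ζ‖ ≤ C) (s : Finset ℕ) (N : ℕ) (ζ : ℂ) :
    ∑ j ∈ s ×ˢ s, ‖dbar (fun z => (gridBump δ N j z : ℂ)) ζ‖ ≤ 9 * C / δ := by
  set near := (s.filter fun k : ℕ => ((δ⁻¹ • ζ).re + N) - k ∈ Icc (-1) 1) ×ˢ
    (s.filter fun k : ℕ => ((δ⁻¹ • ζ).im + N) - k ∈ Icc (-1) 1)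
  have hcard : near.card ≤ 9 := by
    rw [Finset.card_product]
    exact Nat.mul_le_mul (card_filter_sub_mem_Icc_le _ _) (card_filter_sub_mem_Icc_le _ _)
  have hnear : near ⊆ s ×ˢ s :=
    Finset.product_subset_product (Finset.filter_subset _ _) (Finset.filter_subset _ _)
  have hfar (j) (hj : j ∈ s ×ˢ s) (hjn : j ∉ near) :
      ‖dbar (fun z => (gridBump δ N j z : ℂ)) ζ‖ = 0 := by
    by_contra hne
    have hsupp := support_dbar_subset _ (norm_ne_zero_iff.1 hne)
    have hmem := sub_gridPoint_mem_of_mem_tsupport_gridBump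
      (tsupport_comp_subset (g := ((↑) : ℝ → ℂ)) Complex.ofReal_zero (gridBump δ N j) hsupp)
    rw [Complex.mem_reProdIm, Complex.sub_re, Complex.sub_im, gridPoint, sub_sub_eq_add_sub,
      sub_sub_eq_add_sub] at hmem
    rw [Finset.mem_product] at hj
    exact hjn (Finset.mem_product.2
      ⟨Finset.mem_filter.2 ⟨hj.1, hmem.1⟩, Finset.mem_filter.2 ⟨hj.2, hmem.2⟩⟩)
  have hbound (j) : ‖dbar (fun z => (gridBump δ N j z : ℂ)) ζ‖ ≤ δ⁻¹ * C := by
    rw [dbar_gridBump, norm_smul, norm_inv, Real.norm_of_nonneg hδ.le]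
    gcongr
    exact hC _
  rw [← Finset.sum_subset hnear hfar]
  calc _ ≤ near.card • (δ⁻¹ * C) := Finset.sum_le_card_nsmul _ _ _ fun j _ => hbound j
    _ ≤ 9 * (δ⁻¹ * C) := by
      rw [nsmul_eq_mul]
      gcongr
      exact_mod_cast hcard
    _ = 9 * C / δ := by ring

lemma exists_bumpPartition : ∃ C, 0 ≤ C ∧ ∀ δ > 0, ∀ R : ℝ,
    Nonempty (BumpPartition δ C (ball 0 R)) := by
  obtain ⟨C, hC₀, hC⟩ := exists_norm_dbar_squareBump_le
  refine ⟨9 * C, by positivity, fun δ hδ R => ?_⟩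
  obtain ⟨N, hN⟩ := exists_nat_ge (R / δ)
  rw [div_le_iff₀' hδ] at hN
  exact ⟨{
    index := Finset.range (2 * N + 1) ×ˢ Finset.range (2 * N + 1)
    center := fun j => δ • gridPoint N j
    bump := gridBump δ N
    contDiff_bump := fun j =>
      contDiff_squareBump.comp ((contDiff_id.const_smul δ⁻¹).sub contDiff_const)
    bump_nonneg := fun j z => mul_nonneg (unitBump_nonneg _) (unitBump_nonneg _)
    tsupport_bump_subset := tsupport_gridBump_subset hδ N
    sum_bump_eq_one := fun z hz =>
      sum_gridBump_eq_one hδ ((mem_ball_zero_iff.1 hz).le.trans hN)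
    sum_norm_dbar_bump_le := sum_norm_dbar_gridBump_le hδ hC₀ hC _ N }⟩

end BumpPartition

section Smoothing

variable {E : Type*} [NormedAddCommGroup E]

open Classical in
/-- A holomorphic substitute for `f : K → E` on a disc `B`: `f` itself when `B ⊆ K`, otherwise a
constant, which is a value of `f` on `B ∩ K` when there is one. -/
noncomputable def patch (f : ℂ → E) (K B : Set ℂ) : ℂ → E :=
  if B ⊆ K then f else if h : (B ∩ K).Nonempty then fun _ => f h.some else fun _ => 0

lemma exists_patch_eq (f : ℂ → E) {K B : Set ℂ} (hne : (B ∩ K).Nonempty) {ζ : ℂ} (hζ : ζ ∈ B) :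
    ∃ a ∈ B ∩ K, patch f K B ζ = f a := by
  by_cases hB : B ⊆ K
  · exact ⟨ζ, ⟨hζ, hB hζ⟩, by rw [patch, if_pos hB]⟩
  · exact ⟨hne.some, hne.some_mem, by rw [patch, if_neg hB, dif_pos hne]⟩

lemma norm_patch_sub_le {f : ℂ → E} {K : Set ℂ} {δ ω : ℝ} {q ζ₀ ζ : ℂ}
    (hω : ∀ a ∈ K, ∀ b ∈ K, dist a b ≤ 6 * δ → ‖f a - f b‖ ≤ ω) (hζ₀ : ζ₀ ∈ K)
    (hζ : dist ζ ζ₀ ≤ δ) (hq : ζ ∈ closedBall q (2 * δ)) :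
    ‖patch f K (closedBall q (3 * δ)) ζ - f ζ₀‖ ≤ ω := by
  have hδ : 0 ≤ δ := dist_nonneg.trans hζ
  have hζ' : dist ζ q ≤ 2 * δ := hq
  have hζ₀q : dist ζ₀ q ≤ 3 * δ := by linarith [dist_triangle_left ζ₀ q ζ]
  obtain ⟨a, ⟨haq, haK⟩, ha⟩ := exists_patch_eq f ⟨ζ₀, hζ₀q, hζ₀⟩
    (closedBall_subset_closedBall (by linarith) hq)
  rw [mem_closedBall] at haq
  rw [ha]
  exact hω a haK ζ₀ hζ₀ (by linarith [dist_triangle_right a ζ₀ q])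

variable [NormedSpace ℂ E]

lemma contDiffAt_patch {f : ℂ → E} {K B : Set ℂ} [CompleteSpace E]
    (hf : DifferentiableOn ℂ f (interior K)) {ζ : ℂ} (hζ : ζ ∈ interior B) :
    ContDiffAt ℂ 1 (patch f K B) ζ := by
  unfold patch
  split_ifs with hB hne
  · exact (hf.contDiffOn isOpen_interior).contDiffAt
      (isOpen_interior.mem_nhds (interior_mono hB hζ))
  · exact contDiffAt_const
  · exact contDiffAt_const

lemma norm_sum_smul_sub_sum_smul_le {ι : Type*} (s : Finset ι) (w : ι → ℂ) (v : ι → E) (c : E)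
    {ω : ℝ} (h : ∀ j ∈ s, w j ≠ 0 → ‖v j - c‖ ≤ ω) :
    ‖∑ j ∈ s, w j • v j - (∑ j ∈ s, w j) • c‖ ≤ (∑ j ∈ s, ‖w j‖) * ω := by
  rw [Finset.sum_smul, ← Finset.sum_sub_distrib, Finset.sum_mul]
  refine norm_sum_le_of_le _ fun j hj => ?_
  rw [← smul_sub, norm_smul]
  rcases eq_or_ne (w j) 0 with hw | hw
  · rw [hw, norm_zero, zero_mul, zero_mul]
  · exact mul_le_mul_of_nonneg_left (h j hj hw) (norm_nonneg _)

namespace BumpPartition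

variable {δ C : ℝ} {U : Set ℂ} (P : BumpPartition δ C U)

lemma contDiff_ofReal_bump (j : ℕ × ℕ) : ContDiff ℝ 1 fun z => (P.bump j z : ℂ) :=
  Complex.ofRealCLM.contDiff.comp (P.contDiff_bump j)

lemma tsupport_ofReal_bump_subset (j : ℕ × ℕ) :
    tsupport (fun z => (P.bump j z : ℂ)) ⊆ closedBall (P.center j) (2 * δ) :=
  (tsupport_comp_subset Complex.ofReal_zero (P.bump j)).trans (P.tsupport_bump_subset j)

lemma sum_dbar_bump_eq_zero (hU : IsOpen U) {ζ : ℂ} (hζ : ζ ∈ U) :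
    ∑ j ∈ P.index, dbar (fun z => (P.bump j z : ℂ)) ζ = 0 := by
  have hone : (fun z => ∑ j ∈ P.index, (P.bump j z : ℂ)) =ᶠ[𝓝 ζ] fun _ => 1 := by
    filter_upwards [hU.mem_nhds hζ] with z hz
    exact_mod_cast P.sum_bump_eq_one z hz
  rw [← dbar_sum _ fun j _ => (P.contDiff_ofReal_bump j).differentiable one_ne_zero ζ, dbar,
    hone.fderiv_eq]
  simp

/-- The smooth, compactly supported function on `ℂ` obtained by gluing the patches of
`f : K → E` over the discs of the partition. -/
noncomputable def smoothing (f : ℂ → E) (K : Set ℂ) (z : ℂ) : E :=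
  ∑ j ∈ P.index, (P.bump j z : ℂ) • patch f K (closedBall (P.center j) (3 * δ)) z

variable {f : ℂ → E} {K : Set ℂ}

lemma hasCompactSupport_smoothing (f : ℂ → E) (K : Set ℂ) :
    HasCompactSupport (P.smoothing f K) := by
  refine HasCompactSupport.intro
    (P.index.isCompact_biUnion fun j _ => isCompact_closedBall (P.center j) (2 * δ))
    fun z hz => Finset.sum_eq_zero fun j hj => ?_
  rw [image_eq_zero_of_notMem_tsupport fun h =>
    hz (mem_biUnion hj (P.tsupport_ofReal_bump_subset j h)), zero_smul]

section Oscillation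

variable {ω : ℝ} {ζ₀ ζ : ℂ}

lemma norm_smoothing_sub_le (hω : ∀ a ∈ K, ∀ b ∈ K, dist a b ≤ 6 * δ → ‖f a - f b‖ ≤ ω)
    (hδ : 0 ≤ δ) (hKU : K ⊆ U) {z : ℂ} (hz : z ∈ K) : ‖P.smoothing f K z - f z‖ ≤ ω := by
  have hsum := P.sum_bump_eq_one z (hKU hz)
  have hsum' : ∑ j ∈ P.index, (P.bump j z : ℂ) = 1 := mod_cast hsum
  have hnorm : ∑ j ∈ P.index, ‖(P.bump j z : ℂ)‖ = 1 := by
    simpa only [Complex.norm_of_nonneg (P.bump_nonneg _ z)] using hsum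
  have h := norm_sum_smul_sub_sum_smul_le P.index (fun j => (P.bump j z : ℂ))
    (fun j => patch f K (closedBall (P.center j) (3 * δ)) z) (f z) fun j _ hj =>
      norm_patch_sub_le hω hz (by rwa [dist_self])
        (P.tsupport_ofReal_bump_subset j (subset_tsupport _ hj))
  rwa [hsum', one_smul, hnorm, one_mul] at h

variable [CompleteSpace E]

lemma contDiffAt_patch_center (hf : DifferentiableOn ℂ f (interior K)) (hδ : 0 < δ) (j : ℕ × ℕ)
    (hζ : ζ ∈ tsupport fun z => (P.bump j z : ℂ)) :
    ContDiffAt ℂ 1 (patch f K (closedBall (P.center j) (3 * δ))) ζ :=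
  contDiffAt_patch hf <| ball_subset_interior_closedBall <|
    closedBall_subset_ball (by linarith) (P.tsupport_ofReal_bump_subset j hζ)

lemma contDiff_bump_smul_patch (hf : DifferentiableOn ℂ f (interior K)) (hδ : 0 < δ)
    (j : ℕ × ℕ) : ContDiff ℝ 1 fun z =>
      (P.bump j z : ℂ) • patch f K (closedBall (P.center j) (3 * δ)) z :=
  contMDiff_iff_contDiff.1 <| contMDiff_of_tsupport fun _ hζ =>
    ContDiffAt.contMDiffAt <| (P.contDiff_ofReal_bump j).contDiffAt.smul <|
    (P.contDiffAt_patch_center hf hδ j (tsupport_smul_subset_left _ _ hζ)).restrict_scalars ℝ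

lemma contDiff_smoothing (hf : DifferentiableOn ℂ f (interior K)) (hδ : 0 < δ) :
    ContDiff ℝ 1 (P.smoothing f K) :=
  ContDiff.sum fun j _ => P.contDiff_bump_smul_patch hf hδ j

lemma dbar_smoothing (hf : DifferentiableOn ℂ f (interior K)) (hδ : 0 < δ) (ζ : ℂ) :
    dbar (P.smoothing f K) ζ = ∑ j ∈ P.index, dbar (fun z => (P.bump j z : ℂ)) ζ •
      patch f K (closedBall (P.center j) (3 * δ)) ζ := by
  refine (dbar_sum _ fun j _ =>
    (P.contDiff_bump_smul_patch hf hδ j).differentiable one_ne_zero ζ).trans ?_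
  exact Finset.sum_congr rfl fun j _ => dbar_smul_of_tsupport
    ((P.contDiff_ofReal_bump j).differentiable one_ne_zero)
    (fun ζ hζ => (P.contDiffAt_patch_center hf hδ j hζ).differentiableAt one_ne_zero) ζ

lemma norm_dbar_smoothing_le (hf : DifferentiableOn ℂ f (interior K)) (hδ : 0 < δ)
    (hω : ∀ a ∈ K, ∀ b ∈ K, dist a b ≤ 6 * δ → ‖f a - f b‖ ≤ ω) (hU : IsOpen U)
    (hKU : cthickening δ K ⊆ U) (hζ₀ : ζ₀ ∈ K) (hζ : dist ζ ζ₀ ≤ δ) :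
    ‖dbar (P.smoothing f K) ζ‖ ≤ C / δ * ω := by
  have hω₀ : 0 ≤ ω := (norm_nonneg _).trans (hω ζ₀ hζ₀ ζ₀ hζ₀ (by rw [dist_self]; positivity))
  have h := norm_sum_smul_sub_sum_smul_le P.index (fun j => dbar (fun z => (P.bump j z : ℂ)) ζ)
    (fun j => patch f K (closedBall (P.center j) (3 * δ)) ζ) (f ζ₀) fun j _ hj =>
      norm_patch_sub_le hω hζ₀ hζ (P.tsupport_ofReal_bump_subset j (support_dbar_subset _ hj))
  rw [P.sum_dbar_bump_eq_zero hU (hKU (mem_cthickening_of_dist_le _ _ _ _ hζ₀ hζ)), zero_smul,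
    sub_zero, ← P.dbar_smoothing hf hδ] at h
  exact h.trans (mul_le_mul_of_nonneg_right (P.sum_norm_dbar_bump_le ζ) hω₀)

lemma dbar_smoothing_eq_zero (hf : DifferentiableOn ℂ f (interior K)) (hδ : 0 < δ)
    (hU : IsOpen U) (hKU : cthickening δ K ⊆ U) (hζ₀ : closedBall ζ₀ (6 * δ) ⊆ K)
    (hζ : dist ζ ζ₀ ≤ δ) : dbar (P.smoothing f K) ζ = 0 := by
  have hζ₀K : ζ₀ ∈ K := hζ₀ (mem_closedBall_self (by positivity))
  have hpatch (j) (hj : dbar (fun z => (P.bump j z : ℂ)) ζ ≠ 0) :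
      patch f K (closedBall (P.center j) (3 * δ)) ζ = f ζ := by
    have hjζ : dist ζ (P.center j) ≤ 2 * δ :=
      P.tsupport_ofReal_bump_subset j (support_dbar_subset _ hj)
    have hsub : closedBall (P.center j) (3 * δ) ⊆ closedBall ζ₀ (6 * δ) :=
      closedBall_subset_closedBall' (by
        linarith [dist_triangle_left (P.center j) ζ₀ ζ])
    rw [patch, if_pos (hsub.trans hζ₀)]
  have h := norm_sum_smul_sub_sum_smul_le P.index (fun j => dbar (fun z => (P.bump j z : ℂ)) ζ)
    (fun j => patch f K (closedBall (P.center j) (3 * δ)) ζ) (f ζ) (ω := 0) fun j _ hj => by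
      rw [hpatch j hj, sub_self, norm_zero]
  rwa [P.sum_dbar_bump_eq_zero hU (hKU (mem_cthickening_of_dist_le _ _ _ _ hζ₀K hζ)), zero_smul,
    sub_zero, ← P.dbar_smoothing hf hδ, mul_zero, norm_le_zero_iff] at h

end Oscillation

end BumpPartition

end Smoothing

section VectorPolynomials

variable {E : Type*} [NormedAddCommGroup E] [NormedSpace ℂ E]

variable (E) in
/-- The polynomial functions of one complex variable with coefficients in `E`. -/
def vectorPolynomials : Submodule ℂ (ℂ → E) :=
  Submodule.span ℂ {p | ∃ (q : Polynomial ℂ) (e : E), p = fun z => q.eval z • e}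

lemma eval_smul_mem_vectorPolynomials (q : Polynomial ℂ) (e : E) :
    (fun z => q.eval z • e) ∈ vectorPolynomials E :=
  Submodule.subset_span ⟨q, e, rfl⟩

/-- The uniform limits on `K` of polynomial functions with coefficients in `E`. The values outside
`K` are irrelevant. -/
def IsVectorPolyLimit (K : Set ℂ) (h : ℂ → E) : Prop :=
  ∀ ε > 0, ∃ p ∈ vectorPolynomials E, ∀ z ∈ K, ‖h z - p z‖ < ε

variable {K : Set ℂ} {h k : ℂ → E}

namespace IsVectorPolyLimit

variable (K) in
lemma zero : IsVectorPolyLimit K fun _ => (0 : E) := fun ε hε =>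
  ⟨0, zero_mem _, fun z _ => by simpa using hε⟩

lemma add (hh : IsVectorPolyLimit K h) (hk : IsVectorPolyLimit K k) :
    IsVectorPolyLimit K fun z => h z + k z := by
  intro ε hε
  obtain ⟨p, hp, hhp⟩ := hh (ε / 2) (half_pos hε)
  obtain ⟨r, hr, hkr⟩ := hk (ε / 2) (half_pos hε)
  refine ⟨p + r, add_mem hp hr, fun z hz => ?_⟩
  rw [Pi.add_apply, add_sub_add_comm]
  exact (norm_add_le _ _).trans_lt (by linarith [hhp z hz, hkr z hz])

lemma const_smul (hh : IsVectorPolyLimit K h) (c : ℂ) : IsVectorPolyLimit K fun z => c • h z := by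
  intro ε hε
  obtain ⟨p, hp, hhp⟩ := hh (ε / (‖c‖ + 1)) (by positivity)
  refine ⟨c • p, Submodule.smul_mem _ _ hp, fun z hz => ?_⟩
  have hz' := hhp z hz
  rw [lt_div_iff₀ (by positivity)] at hz'
  rw [Pi.smul_apply, ← smul_sub, norm_smul]
  nlinarith [norm_nonneg (h z - p z)]

lemma of_forall_exists_norm_sub_le
    (hh : ∀ ε > 0, ∃ k, IsVectorPolyLimit K k ∧ ∀ z ∈ K, ‖h z - k z‖ ≤ ε) :
    IsVectorPolyLimit K h := by
  intro ε hε
  obtain ⟨k, hk, hhk⟩ := hh (ε / 2) (half_pos hε)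
  obtain ⟨p, hp, hkp⟩ := hk (ε / 2) (half_pos hε)
  refine ⟨p, hp, fun z hz => ?_⟩
  linarith [norm_sub_le_norm_sub_add_norm_sub (h z) (k z) (p z), hhk z hz, hkp z hz]

end IsVectorPolyLimit

lemma IsPolyLimit.smul_const [CompactSpace K] {a : ℂ → ℂ} (ha : IsPolyLimit K a) (e : E) :
    IsVectorPolyLimit K fun z => a z • e := by
  intro ε hε
  obtain ⟨q, hq⟩ := ha.exists_polynomial_norm_sub_lt (ε := ε / (‖e‖ + 1)) (by positivity)
  refine ⟨_, eval_smul_mem_vectorPolynomials q e, fun z hz => ?_⟩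
  have hz' := hq z hz
  rw [lt_div_iff₀ (by positivity)] at hz'
  rw [← sub_smul, norm_smul]
  nlinarith [norm_nonneg (a z - q.eval z)]

end VectorPolynomials

section CauchyTransform

variable {E : Type*} [NormedAddCommGroup E] {g : ℂ → E}

/-- The pointwise bound allowed for the error in the approximation of the Cauchy transform of `g`:
the kernel term pays for the points near `K`, the term `τ * ‖g ζ‖` for the others. -/
noncomputable def cauchyError (δ B τ : ℝ) (g : ℂ → E) (z ζ : ℂ) : ℝ :=
  B * decayKernel δ ‖z - ζ‖ + τ * ‖g ζ‖

section CauchyError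

variable {δ B τ : ℝ}

lemma cauchyError_nonneg (hB : 0 ≤ B) (hτ : 0 ≤ τ) (z ζ : ℂ) : 0 ≤ cauchyError δ B τ g z ζ :=
  add_nonneg (mul_nonneg hB (decayKernel_nonneg δ (norm_nonneg _))) (mul_nonneg hτ (norm_nonneg _))

lemma integrable_cauchyError (hδ : 0 < δ) (hg : Integrable g) (z : ℂ) :
    Integrable (cauchyError δ B τ g z) :=
  (((integrable_decayKernel hδ).comp_sub_left z).const_mul B).add (hg.norm.const_mul τ)

lemma integral_cauchyError (hδ : 0 < δ) (hg : Integrable g) (z : ℂ) :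
    ∫ ζ, cauchyError δ B τ g z ζ = B * (2 * π * δ) + τ * ∫ ζ, ‖g ζ‖ := by
  simp only [cauchyError]
  rw [integral_add (((integrable_decayKernel hδ).comp_sub_left z).const_mul B)
    (hg.norm.const_mul τ), integral_const_mul, integral_const_mul,
    integral_sub_left_eq_self (fun ζ : ℂ => decayKernel δ ‖ζ‖), integral_decayKernel hδ]

end CauchyError

/-- On `T` the Cauchy kernel `(z - ζ)⁻¹` is approximated, up to the error `b` after weighting by
`‖g ζ‖`, by functions of `z` and `ζ` that are affine in `ζ` with coefficients in the uniform closure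
of the polynomials in `z`. -/
def KernelApproximable (K : Set ℂ) [CompactSpace K] (g : ℂ → E) (b : ℂ → ℂ → ℝ) (T : Set ℂ) :
    Prop :=
  ∃ a c, IsPolyLimit K a ∧ IsPolyLimit K c ∧
    ∀ ζ ∈ T, ∀ z ∈ K, z ≠ ζ → ‖(z - ζ)⁻¹ - (a z + ζ * c z)‖ * ‖g ζ‖ ≤ b z ζ

variable {K : Set ℂ} {b : ℂ → ℂ → ℝ} {T : Set ℂ}

lemma KernelApproximable.mono [CompactSpace K] {S : Set ℂ} (h : KernelApproximable K g b T)
    (hST : S ⊆ T) : KernelApproximable K g b S := by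
  obtain ⟨a, c, ha, hc, hac⟩ := h
  exact ⟨a, c, ha, hc, fun ζ hζ => hac ζ (hST hζ)⟩

lemma exists_nhds_kernelApproximable [CompactSpace K] (hK : IsConnected Kᶜ) {δ B τ : ℝ}
    (hδ : 0 < δ) (hB : 0 ≤ B) (hτ : 0 < τ)
    (hgB : ∀ ζ₀ ∈ K, ∀ ζ, dist ζ ζ₀ ≤ δ → ‖g ζ‖ ≤ B)
    (hg₀ : ∀ ζ₀, closedBall ζ₀ (6 * δ) ⊆ K → ∀ ζ, dist ζ ζ₀ ≤ δ → g ζ = 0) (ζ₀ : ℂ) :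
    ∃ V ∈ 𝓝 ζ₀, KernelApproximable K g (cauchyError δ (2 * 10 ^ 10 * B) τ g) V := by
  have hB' : 0 ≤ 2 * 10 ^ 10 * B := by positivity
  have hnear : closedBall ζ₀ δ ∈ 𝓝 ζ₀ := closedBall_mem_nhds ζ₀ hδ
  by_cases hζ₀ : ζ₀ ∈ K
  · by_cases hball : closedBall ζ₀ (6 * δ) ⊆ K
    · refine ⟨_, hnear, _, _, .const K 0, .const K 0, fun ζ hζ z _ _ => ?_⟩
      rw [hg₀ ζ₀ hball ζ hζ, norm_zero, mul_zero]
      exact cauchyError_nonneg hB' hτ.le z ζ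
    · obtain ⟨p, hpζ₀, hpK⟩ := not_subset.1 hball
      rw [mem_closedBall_iff_norm] at hpζ₀
      obtain ⟨a, c, ha, hc, hac⟩ :=
        exists_isPolyLimit_norm_inv_sub_le hK hδ hpK (hpζ₀.trans (by linarith))
      refine ⟨_, hnear, a, c, ha, hc, fun ζ hζ z hz hzζ => ?_⟩
      have hker : 0 ≤ decayKernel δ ‖z - ζ‖ := decayKernel_nonneg δ (norm_nonneg _)
      calc ‖(z - ζ)⁻¹ - (a z + ζ * c z)‖ * ‖g ζ‖ ≤ 2 * 10 ^ 10 * decayKernel δ ‖z - ζ‖ * B := by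
            gcongr
            exacts [hac ζ (mem_closedBall_iff_norm.1 hζ) z hz hzζ, hgB ζ₀ hζ₀ ζ hζ]
        _ = 2 * 10 ^ 10 * B * decayKernel δ ‖z - ζ‖ := by ring
        _ ≤ cauchyError δ (2 * 10 ^ 10 * B) τ g z ζ := le_add_of_nonneg_right (by positivity)
  · obtain ⟨a, ha, hV⟩ := exists_isPolyLimit_eventually_norm_inv_sub_lt hK.isPreconnected hζ₀ hτ
    refine ⟨_, hV, a, _, ha, .const K 0, fun ζ hζ z hz _ => ?_⟩
    have hker : 0 ≤ decayKernel δ ‖z - ζ‖ := decayKernel_nonneg δ (norm_nonneg _)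
    rw [mul_zero, add_zero]
    calc ‖(z - ζ)⁻¹ - a z‖ * ‖g ζ‖ ≤ τ * ‖g ζ‖ := by gcongr; exact (hζ z hz).le
      _ ≤ cauchyError δ (2 * 10 ^ 10 * B) τ g z ζ := le_add_of_nonneg_left (by positivity)

variable [NormedSpace ℂ E]

/-- The part over `T` of the Cauchy transform of `g` is approximated on `K` by a limit of
polynomials, up to the error `∫ ζ in T, b z ζ`. -/
def CauchyApproximable (K : Set ℂ) (g : ℂ → E) (b : ℂ → ℂ → ℝ) (T : Set ℂ) : Prop :=
  ∃ h, IsVectorPolyLimit K h ∧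
    ∀ z ∈ K, ‖(∫ ζ in T, (z - ζ)⁻¹ • g ζ) - h z‖ ≤ ∫ ζ in T, b z ζ

lemma integrable_inv_sub_smul (hg : Continuous g) (hgc : HasCompactSupport g) (z : ℂ) :
    Integrable fun ζ => (z - ζ)⁻¹ • g ζ := by
  obtain ⟨B, hB⟩ := (hgc.smul_left (f := fun ζ => (1 + ‖z - ζ‖) ^ 2)).exists_bound_of_continuous
    (by fun_prop)
  have hker : Integrable fun ζ => decayKernel 1 ‖z - ζ‖ :=
    (integrable_decayKernel one_pos).comp_sub_left z
  have hmeas : AEStronglyMeasurable fun ζ => (z - ζ)⁻¹ • g ζ :=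
    (measurable_const.sub measurable_id).inv.aestronglyMeasurable.smul hg.aestronglyMeasurable
  refine (hker.const_mul B).mono' hmeas (Eventually.of_forall fun ζ => ?_)
  have hζ : ‖g ζ‖ ≤ B / (1 + ‖z - ζ‖) ^ 2 := by
    rw [le_div_iff₀' (by positivity)]
    simpa [norm_smul, abs_of_nonneg (add_nonneg zero_le_one (norm_nonneg (z - ζ)))] using hB ζ
  calc ‖(z - ζ)⁻¹ • g ζ‖ = ‖z - ζ‖⁻¹ * ‖g ζ‖ := by rw [norm_smul, norm_inv]
    _ ≤ ‖z - ζ‖⁻¹ * (B / (1 + ‖z - ζ‖) ^ 2) := by gcongr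
    _ = B * decayKernel 1 ‖z - ζ‖ := by rw [decayKernel, div_one, one_div, mul_inv]; ring

lemma KernelApproximable.cauchyApproximable [CompactSpace K] (hT : MeasurableSet T)
    (h : KernelApproximable K g b T) (hg : Continuous g) (hgc : HasCompactSupport g)
    (hb : ∀ z, Integrable (b z)) : CauchyApproximable K g b T := by
  obtain ⟨a, c, ha, hc, hac⟩ := h
  refine ⟨_, (ha.smul_const (∫ ζ in T, g ζ)).add (hc.smul_const (∫ ζ in T, ζ • g ζ)),
    fun z hz => ?_⟩
  have hga : IntegrableOn (fun ζ => a z • g ζ) T :=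
    (hg.integrable_of_hasCompactSupport hgc).integrableOn.smul (a z)
  have hgb : IntegrableOn (fun ζ => c z • ζ • g ζ) T :=
    ((continuous_id.smul hg).integrable_of_hasCompactSupport hgc.smul_left).integrableOn.smul (c z)
  have hgab : IntegrableOn (fun ζ => a z • g ζ + c z • ζ • g ζ) T := hga.add hgb
  rw [← integral_smul, ← integral_smul, ← integral_add hga hgb,
    ← integral_sub (integrable_inv_sub_smul hg hgc z).integrableOn hgab]
  refine norm_integral_le_of_norm_le (hb z).integrableOn ?_
  filter_upwards [ae_restrict_of_ae (Measure.ae_ne volume z), ae_restrict_mem hT] with ζ hζz hζ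
  calc ‖(z - ζ)⁻¹ • g ζ - (a z • g ζ + c z • ζ • g ζ)‖
      = ‖((z - ζ)⁻¹ - (a z + ζ * c z)) • g ζ‖ := by congr 1; module
    _ = ‖(z - ζ)⁻¹ - (a z + ζ * c z)‖ * ‖g ζ‖ := norm_smul _ _
    _ ≤ b z ζ := hac ζ hζ z hz hζz.symm

lemma cauchyApproximable_of_inter_of_sdiff {S : Set ℂ} (hS : MeasurableSet S)
    (hg : Continuous g) (hgc : HasCompactSupport g) (hb : ∀ z, Integrable (b z))
    (hTS : CauchyApproximable K g b (T ∩ S)) (hTS' : CauchyApproximable K g b (T \ S)) :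
    CauchyApproximable K g b T := by
  obtain ⟨h, hh, hbh⟩ := hTS
  obtain ⟨k, hk, hbk⟩ := hTS'
  refine ⟨_, hh.add hk, fun z hz => ?_⟩
  rw [← integral_inter_add_sdiff hS (integrable_inv_sub_smul hg hgc z).integrableOn,
    ← integral_inter_add_sdiff hS (hb z).integrableOn, add_sub_add_comm]
  exact (norm_add_le _ _).trans (add_le_add (hbh z hz) (hbk z hz))

lemma cauchyApproximable_of_locally [CompactSpace K] (hg : Continuous g)
    (hgc : HasCompactSupport g) (hb : ∀ z, Integrable (b z))
    (hloc : ∀ ζ₀, ∃ V ∈ 𝓝 ζ₀, KernelApproximable K g b V) {S : Set ℂ} (hS : IsCompact S) :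
    CauchyApproximable K g b S := by
  suffices ∃ U, IsOpen U ∧ S ⊆ U ∧ ∀ T ⊆ U, MeasurableSet T → CauchyApproximable K g b T by
    obtain ⟨U, -, hSU, hU⟩ := this
    exact hU S hSU hS.measurableSet
  refine hS.induction_on (p := fun S => ∃ U, IsOpen U ∧ S ⊆ U ∧
    ∀ T ⊆ U, MeasurableSet T → CauchyApproximable K g b T) ?_ ?_ ?_ ?_
  · refine ⟨∅, isOpen_empty, le_rfl, fun T hT _ => ⟨_, .zero K, fun z _ => ?_⟩⟩
    simp [subset_empty_iff.1 hT]
  · rintro S S' hSS' ⟨U, hU, hSU, H⟩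
    exact ⟨U, hU, hSS'.trans hSU, H⟩
  · rintro S S' ⟨U, hU, hSU, H⟩ ⟨U', hU', hSU', H'⟩
    refine ⟨U ∪ U', hU.union hU', union_subset_union hSU hSU', fun T hT hTm => ?_⟩
    exact cauchyApproximable_of_inter_of_sdiff hU.measurableSet hg hgc hb
      (H _ inter_subset_right (hTm.inter hU.measurableSet))
      (H' _ (sdiff_subset_iff.2 hT) (hTm.diff hU.measurableSet))
  · intro ζ₀ _
    obtain ⟨V, hV, hVK⟩ := hloc ζ₀
    obtain ⟨U, hUV, hU, hζ₀⟩ := _root_.mem_nhds_iff.1 hV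
    exact ⟨U, mem_nhdsWithin_of_mem_nhds (hU.mem_nhds hζ₀), U, hU, le_rfl, fun T hT hTm =>
      (hVK.mono (hT.trans hUV)).cauchyApproximable hTm hg hgc hb⟩

lemma exists_isVectorPolyLimit_norm_integral_sub_le [CompactSpace K] (hK : IsConnected Kᶜ)
    (hg : Continuous g) (hgc : HasCompactSupport g) {δ B τ : ℝ} (hδ : 0 < δ) (hB : 0 ≤ B)
    (hτ : 0 < τ) (hgB : ∀ ζ₀ ∈ K, ∀ ζ, dist ζ ζ₀ ≤ δ → ‖g ζ‖ ≤ B)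
    (hg₀ : ∀ ζ₀, closedBall ζ₀ (6 * δ) ⊆ K → ∀ ζ, dist ζ ζ₀ ≤ δ → g ζ = 0) :
    ∃ h, IsVectorPolyLimit K h ∧ ∀ z ∈ K,
      ‖(∫ ζ, (z - ζ)⁻¹ • g ζ) - h z‖ ≤ 2 * 10 ^ 10 * B * (2 * π * δ) + τ := by
  have hgi : Integrable g := hg.integrable_of_hasCompactSupport hgc
  set A : ℝ := ∫ ζ, ‖g ζ‖
  have : 0 ≤ A := integral_nonneg fun _ => norm_nonneg _
  set τ' : ℝ := τ / (A + 1)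
  have hτ' : 0 < τ' := by positivity
  have hτ'A : τ' * A ≤ τ := by
    rw [div_mul_eq_mul_div, div_le_iff₀ (by positivity)]
    linarith
  set b := cauchyError δ (2 * 10 ^ 10 * B) τ' g
  have hb : ∀ z, Integrable (b z) := integrable_cauchyError hδ hgi
  obtain ⟨h, hh, hbh⟩ := cauchyApproximable_of_locally hg hgc hb
    (exists_nhds_kernelApproximable hK hδ hB hτ' hgB hg₀) hgc.isCompact
  refine ⟨h, hh, fun z hz => ?_⟩
  have hint : ∫ ζ in tsupport g, (z - ζ)⁻¹ • g ζ = ∫ ζ, (z - ζ)⁻¹ • g ζ :=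
    setIntegral_eq_integral_of_forall_compl_eq_zero fun ζ hζ => by
      rw [image_eq_zero_of_notMem_tsupport hζ, smul_zero]
  calc ‖(∫ ζ, (z - ζ)⁻¹ • g ζ) - h z‖ ≤ ∫ ζ in tsupport g, b z ζ := hint ▸ hbh z hz
    _ ≤ ∫ ζ, b z ζ := setIntegral_le_integral (hb z) <| Eventually.of_forall <|
        cauchyError_nonneg (by positivity) hτ'.le z
    _ = 2 * 10 ^ 10 * B * (2 * π * δ) + τ' * A := integral_cauchyError hδ hgi z
    _ ≤ 2 * 10 ^ 10 * B * (2 * π * δ) + τ := by gcongr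

end CauchyTransform

section MergelyanTheorem

variable {E : Type*} [NormedAddCommGroup E] [NormedSpace ℂ E]

lemma norm_sub_inv_two_pi_smul_le (x y : E) :
    ‖x - (2 * π : ℂ)⁻¹ • y‖ ≤ ‖(2 * π : ℂ) • x - y‖ := by
  have hpi : (2 * π : ℂ) ≠ 0 := by simp [Real.pi_ne_zero]
  have hnorm : ‖(2 * π : ℂ)⁻¹‖ ≤ 1 := by
    rw [norm_inv]
    refine inv_le_one_of_one_le₀ ?_
    simp only [norm_mul, Complex.norm_ofNat, Complex.norm_real, Real.norm_of_nonneg Real.pi_pos.le]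
    linarith [Real.pi_gt_three]
  calc ‖x - (2 * π : ℂ)⁻¹ • y‖ = ‖(2 * π : ℂ)⁻¹ • ((2 * π : ℂ) • x - y)‖ := by
        rw [smul_sub, inv_smul_smul₀ hpi]
    _ ≤ ‖(2 * π : ℂ) • x - y‖ := by
        rw [norm_smul]; exact mul_le_of_le_one_left (norm_nonneg _) hnorm

theorem isVectorPolyLimit_of_differentiableOn_interior [CompleteSpace E] {K : Set ℂ}
    (hK : IsCompact K) (hKc : IsConnected Kᶜ) {f : ℂ → E} (hf : ContinuousOn f K)
    (hfd : DifferentiableOn ℂ f (interior K)) : IsVectorPolyLimit K f := by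
  have : CompactSpace K := isCompact_iff_compactSpace.1 hK
  obtain ⟨C, hC, hpart⟩ := exists_bumpPartition
  refine .of_forall_exists_norm_sub_le fun ε hε => ?_
  let c : ℝ := 2 * 10 ^ 10 * C * (2 * π) + 2
  have hc : 0 < c := by positivity
  let ω : ℝ := ε / c
  have hω : 0 < ω := by positivity
  obtain ⟨η, hη, hfη⟩ := Metric.uniformContinuousOn_iff_le.1
    (hK.uniformContinuousOn_of_continuous hf) ω hω
  let δ : ℝ := η / 6
  have hδ : 0 < δ := by positivity
  have hfω : ∀ a ∈ K, ∀ b ∈ K, dist a b ≤ 6 * δ → ‖f a - f b‖ ≤ ω := fun a ha b hb hab =>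
    dist_eq_norm (f a) (f b) ▸ hfη a ha b hb (hab.trans_eq (mul_div_cancel₀ η (by norm_num)))
  obtain ⟨R, hR⟩ := (hK.isBounded.cthickening (δ := δ)).subset_ball 0
  obtain ⟨P⟩ := hpart δ hδ R
  let F := P.smoothing f K
  have hF : ContDiff ℝ 1 F := P.contDiff_smoothing hfd hδ
  have hFc : HasCompactSupport F := P.hasCompactSupport_smoothing f K
  obtain ⟨h, hh, hFh⟩ := exists_isVectorPolyLimit_norm_integral_sub_le hKc (continuous_dbar hF)
    (hFc.mono' (support_dbar_subset F)) hδ (B := C / δ * ω) (by positivity) hω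
    (fun ζ₀ hζ₀ ζ => P.norm_dbar_smoothing_le hfd hδ hfω isOpen_ball hR hζ₀)
    (fun ζ₀ hζ₀ ζ => P.dbar_smoothing_eq_zero hfd hδ isOpen_ball hR hζ₀)
  refine ⟨_, hh.const_smul (2 * π : ℂ)⁻¹, fun z hz => ?_⟩
  calc ‖f z - (2 * π : ℂ)⁻¹ • h z‖ ≤ ‖f z - F z‖ + ‖F z - (2 * π : ℂ)⁻¹ • h z‖ :=
        norm_sub_le_norm_sub_add_norm_sub _ _ _
    _ ≤ ω + (2 * 10 ^ 10 * (C / δ * ω) * (2 * π * δ) + ω) := by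
        gcongr
        · rw [norm_sub_rev]
          exact P.norm_smoothing_sub_le hfω hδ.le ((self_subset_cthickening K).trans hR) hz
        · refine (norm_sub_inv_two_pi_smul_le _ _).trans ?_
          exact integral_inv_sub_smul_dbar hF hFc z ▸ hFh z hz
    _ = ω * c := by simp only [c]; field_simp; ring
    _ = ε := div_mul_cancel₀ ε hc.ne'

end MergelyanTheorem

section PolynomialDerivatives

variable {E : Type*} [NormedAddCommGroup E] [NormedSpace ℂ E] {p : ℂ → E}

lemma const_mem_vectorPolynomials (e : E) : (fun _ => e) ∈ vectorPolynomials E := by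
  simpa using eval_smul_mem_vectorPolynomials 1 e

lemma contDiff_of_mem_vectorPolynomials (hp : p ∈ vectorPolynomials E) : ContDiff ℂ ⊤ p := by
  induction hp using Submodule.span_induction with
  | mem _ hq =>
    obtain ⟨q, e, rfl⟩ := hq
    exact (AnalyticOnNhd.eval_polynomial q).contDiff.smul contDiff_const
  | zero => exact contDiff_const
  | add _ _ _ _ hp hr => exact hp.add hr
  | smul c _ _ hp => exact contDiff_const.smul hp

lemma iteratedDeriv_eval_smul (q : Polynomial ℂ) (e : E) (k : ℕ) :
    iteratedDeriv k (fun z => q.eval z • e) =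
      fun z => (Polynomial.derivative^[k] q).eval z • e := by
  induction k with
  | zero => simp
  | succ k ih =>
    ext z
    rw [iteratedDeriv_succ, ih, Function.iterate_succ_apply']
    exact ((Polynomial.hasDerivAt _ z).smul_const e).deriv

lemma exists_derivative_eq (q : Polynomial ℂ) : ∃ r : Polynomial ℂ, r.derivative = q := by
  induction q using Polynomial.induction_on' with
  | add p q hp hq =>
    obtain ⟨P, rfl⟩ := hp
    obtain ⟨Q, rfl⟩ := hq
    exact ⟨P + Q, Polynomial.derivative_add⟩
  | monomial n a =>
    refine ⟨Polynomial.monomial (n + 1) (a / (n + 1)), ?_⟩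
    rw [Polynomial.derivative_monomial_succ, div_mul_cancel₀ a (Nat.cast_add_one_ne_zero n)]

lemma exists_mem_vectorPolynomials_deriv_eq (hp : p ∈ vectorPolynomials E) :
    ∃ P ∈ vectorPolynomials E, deriv P = p := by
  induction hp using Submodule.span_induction with
  | mem _ hq =>
    obtain ⟨q, e, rfl⟩ := hq
    obtain ⟨r, rfl⟩ := exists_derivative_eq q
    exact ⟨_, eval_smul_mem_vectorPolynomials r e, funext fun z =>
      ((r.hasDerivAt z).smul_const e).deriv⟩
  | zero => exact ⟨0, zero_mem _, funext fun z => deriv_const z 0⟩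
  | add _ _ _ _ hp hr =>
    obtain ⟨P, hP, rfl⟩ := hp
    obtain ⟨R, hR, rfl⟩ := hr
    have hd := fun {Q : ℂ → E} (hQ : Q ∈ vectorPolynomials E) =>
      (contDiff_of_mem_vectorPolynomials hQ).differentiable (by simp)
    exact ⟨P + R, add_mem hP hR, funext fun z => deriv_add (hd hP z) (hd hR z)⟩
  | smul c _ _ hp =>
    obtain ⟨P, hP, rfl⟩ := hp
    exact ⟨c • P, Submodule.smul_mem _ c hP, funext fun z => deriv_const_smul_field c P⟩

end PolynomialDerivatives

section PathLength

lemma edist_le_of_joinedLe {Y : Type*} [PseudoEMetricSpace Y] {Ω : Set ℂ} {M : ℝ} {z w : ℂ}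
    (hzw : JoinedLe Ω M z w) {h : ℂ → Y} {c : NNReal}
    (hh : ∀ x ∈ Ω, ∃ U ∈ 𝓝 x, LipschitzOnWith c h U) :
    edist (h z) (h w) ≤ c * ENNReal.ofReal M := by
  obtain ⟨γ, hγ, rfl, rfl, hγΩ, hlen⟩ := hzw
  choose! U hU hhU using hh
  obtain ⟨t, ht₀, htmono, ⟨N, htN⟩, htU⟩ := exists_monotone_Icc_subset_open_cover_Icc
    (zero_le_one' ℝ) (c := fun x : Ω => (Icc (0 : ℝ) 1).domRestrict γ ⁻¹' interior (U x))
    (fun x => isOpen_interior.preimage hγ.domRestrict)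
    (fun s _ => mem_iUnion.2 ⟨⟨γ s, hγΩ s s.2⟩, mem_interior_iff_mem_nhds.2 (hU _ (hγΩ s s.2))⟩)
  have hstep : ∀ j, edist (h (γ (t j))) (h (γ (t (j + 1)))) ≤
      c * edist (γ (t (j + 1))) (γ (t j)) := fun j => by
    obtain ⟨x, hx⟩ := htU j
    have hj := htmono j.le_succ
    rw [edist_comm (γ (t (j + 1)))]
    exact hhU x x.2 (interior_subset (hx (left_mem_Icc.2 hj)))
      (interior_subset (hx (right_mem_Icc.2 hj)))
  have hmono : Monotone fun j => (t j : ℝ) := fun _ _ hij => htmono hij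
  calc edist (h (γ 0)) (h (γ 1)) = edist (h (γ (t 0))) (h (γ (t N))) := by rw [ht₀, htN N le_rfl]
    _ ≤ ∑ j ∈ Finset.range N, edist (h (γ (t j))) (h (γ (t (j + 1)))) :=
        edist_le_range_sum_edist (fun j => h (γ (t j))) N
    _ ≤ ∑ j ∈ Finset.range N, c * edist (γ (t (j + 1))) (γ (t j)) :=
        Finset.sum_le_sum fun j _ => hstep j
    _ = c * ∑ j ∈ Finset.range N, edist (γ (t (j + 1))) (γ (t j)) := Finset.mul_sum _ _ _ |>.symm
    _ ≤ c * ENNReal.ofReal M := by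
        gcongr
        exact (eVariationOn.sum_le hmono fun j => (t j).2).trans hlen

lemma norm_sub_le_of_joinedLe {E : Type*} [NormedAddCommGroup E] [NormedSpace ℂ E] {Ω : Set ℂ}
    (hΩ : IsOpen Ω) {M : ℝ} {z w : ℂ} (hzw : JoinedLe Ω M z w) {h h' : ℂ → E}
    (hh : ∀ x ∈ Ω, HasDerivAt h (h' x) x) {c : NNReal} (hc : ∀ x ∈ Ω, ‖h' x‖ ≤ c) :
    ‖h w - h z‖ ≤ c * max M 0 := by
  have hloc : ∀ x ∈ Ω, ∃ U ∈ 𝓝 x, LipschitzOnWith c h U := fun x hx => by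
    obtain ⟨r, hr, hball⟩ := Metric.mem_nhds_iff.1 (hΩ.mem_nhds hx)
    exact ⟨_, ball_mem_nhds x hr, (convex_ball x r).lipschitzOnWith_of_nnnorm_hasDerivWithin_le
      (fun y hy => (hh y (hball hy)).hasDerivWithinAt) fun y hy => hc y (hball hy)⟩
  have hle := ENNReal.toReal_mono (by finiteness) (edist_le_of_joinedLe hzw hloc)
  rwa [ENNReal.toReal_mul, ENNReal.coe_toReal, ENNReal.toReal_ofReal', ← dist_edist, dist_comm,
    dist_eq_norm] at hle

end PathLength

section Jets

variable {E : Type*} [NormedAddCommGroup E] [NormedSpace ℂ E] {Ω : Set ℂ} {n : ℕ} {F : ℕ → ℂ → E}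

/-- The geometric hypotheses on a plane domain under which polynomials approximate holomorphic
functions together with their derivatives. -/
structure IsApproximationDomain (Ω : Set ℂ) (M : ℝ) : Prop where
  isOpen : IsOpen Ω
  isBounded : Bornology.IsBounded Ω
  interior_closure : interior (closure Ω) = Ω
  isConnected_compl_closure : IsConnected (closure Ω)ᶜ
  joinedLe : ∀ z ∈ Ω, ∀ w ∈ Ω, JoinedLe Ω M z w

/-- `F 0, …, F n` are the derivatives of order at most `n` of a holomorphic function on `Ω`. -/
structure IsHolomorphicJet (Ω : Set ℂ) (n : ℕ) (F : ℕ → ℂ → E) : Prop where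
  hasDerivAt : ∀ k < n, ∀ z ∈ Ω, HasDerivAt (F k) (F (k + 1) z) z
  differentiableAt : ∀ z ∈ Ω, DifferentiableAt ℂ (F n) z

lemma IsHolomorphicJet.tail (hF : IsHolomorphicJet Ω (n + 1) F) :
    IsHolomorphicJet Ω n fun k => F (k + 1) :=
  ⟨fun k hk => hF.hasDerivAt (k + 1) (by omega), hF.differentiableAt⟩

lemma IsHolomorphicJet.differentiableAt_of_le (hF : IsHolomorphicJet Ω n F) {k : ℕ} (hk : k ≤ n)
    {z : ℂ} (hz : z ∈ Ω) : DifferentiableAt ℂ (F k) z := by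
  rcases hk.lt_or_eq with hk | rfl
  exacts [(hF.hasDerivAt k hk z hz).differentiableAt, hF.differentiableAt z hz]

lemma IsHolomorphicJet.congr {G : ℕ → ℂ → E} (hG : IsHolomorphicJet Ω n G) (hΩ : IsOpen Ω)
    (hFG : ∀ k ≤ n, EqOn (F k) (G k) Ω) : IsHolomorphicJet Ω n F where
  hasDerivAt k hk z hz := by
    rw [hFG (k + 1) hk hz]
    exact (hG.hasDerivAt k hk z hz).congr_of_eventuallyEq
      ((hFG k hk.le).eventuallyEq_of_mem (hΩ.mem_nhds hz))
  differentiableAt z hz := (hG.differentiableAt z hz).congr_of_eventuallyEq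
    ((hFG n le_rfl).eventuallyEq_of_mem (hΩ.mem_nhds hz))

/-- Approximating the derivative and integrating: the error of the primitive, normalized at a point
of `Ω`, is at most the error of the derivative times the length of a path. -/
lemma IsApproximationDomain.exists_primitive_approx {M : ℝ} (hΩ : IsApproximationDomain Ω M)
    {f f' p : ℂ → E} (hf : ContinuousOn f (closure Ω)) (hff' : ∀ z ∈ Ω, HasDerivAt f (f' z) z)
    (hp : p ∈ vectorPolynomials E) {c : NNReal} (hc : ∀ z ∈ Ω, ‖f' z - p z‖ ≤ c) :
    ∃ P ∈ vectorPolynomials E, deriv P = p ∧ ∀ z ∈ closure Ω, ‖f z - P z‖ ≤ c * max M 0 := by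
  obtain ⟨P, hP, rfl⟩ := exists_mem_vectorPolynomials_deriv_eq hp
  rcases Ω.eq_empty_or_nonempty with rfl | ⟨z₀, hz₀⟩
  · exact ⟨P, hP, rfl, by simp⟩
  let Q : ℂ → E := P + fun _ => f z₀ - P z₀
  have hQ : Q ∈ vectorPolynomials E := add_mem hP (const_mem_vectorPolynomials _)
  have hQP : deriv Q = deriv P := funext fun z => deriv_add_const _
  have hQd : ∀ z, HasDerivAt Q (deriv P z) z := fun z => hQP ▸
    ((contDiff_of_mem_vectorPolynomials hQ).differentiable (by simp) z).hasDerivAt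
  have hle : ∀ w ∈ Ω, ‖f w - Q w‖ ≤ c * max M 0 := fun w hw => by
    simpa [Q] using norm_sub_le_of_joinedLe hΩ.isOpen (hΩ.joinedLe z₀ hz₀ w hw)
      (fun x hx => (hff' x hx).sub (hQd x)) hc
  have hQc : Continuous Q := (contDiff_of_mem_vectorPolynomials hQ).continuous
  exact ⟨Q, hQ, hQP, fun z hz =>
    le_on_closure hle (hf.sub hQc.continuousOn).norm continuousOn_const hz⟩

theorem IsHolomorphicJet.exists_vectorPolynomial_approx [CompleteSpace E] {M : ℝ}
    (hF : IsHolomorphicJet Ω n F) (hΩ : IsApproximationDomain Ω M)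
    (hFc : ∀ k ≤ n, ContinuousOn (F k) (closure Ω)) {ε : ℝ} (hε : 0 < ε) :
    ∃ p ∈ vectorPolynomials E, ∀ k ≤ n, ∀ z ∈ closure Ω, ‖F k z - iteratedDeriv k p z‖ < ε := by
  induction n generalizing F ε with
  | zero =>
    have hd : DifferentiableOn ℂ (F 0) (interior (closure Ω)) := by
      rw [hΩ.interior_closure]
      exact fun z hz => (hF.differentiableAt z hz).differentiableWithinAt
    obtain ⟨p, hp, hFp⟩ := isVectorPolyLimit_of_differentiableOn_interior
      hΩ.isBounded.isCompact_closure hΩ.isConnected_compl_closure (hFc 0 le_rfl) hd ε hε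
    refine ⟨p, hp, fun k hk z hz => ?_⟩
    rw [Nat.le_zero.1 hk, iteratedDeriv_zero]
    exact hFp z hz
  | succ n ih =>
    let c : NNReal := ⟨ε / (max M 0 + 2), by positivity⟩
    have hc : 0 < (c : ℝ) := div_pos hε (by positivity)
    have hcM : c * (max M 0 + 2) = ε := div_mul_cancel₀ ε (by positivity)
    have hcM₀ : 0 ≤ c * max M 0 := by positivity
    obtain ⟨p, hp, hFp⟩ := ih hF.tail (fun k hk => hFc (k + 1) (by omega)) hc
    obtain ⟨P, hP, rfl, hFP⟩ := hΩ.exists_primitive_approx (hFc 0 (by omega))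
      (hF.hasDerivAt 0 (by omega)) hp
      (fun z hz => by simpa using (hFp 0 (by omega) z (subset_closure hz)).le)
    refine ⟨P, hP, fun k hk z hz => ?_⟩
    cases k with
    | zero => rw [iteratedDeriv_zero]; linarith [hFP z hz]
    | succ k => rw [iteratedDeriv_succ']; linarith [hFp k (by omega) z hz]

end Jets

section SeparatingFunctionals

variable {E : Type*} [NormedAddCommGroup E] [NormedSpace ℂ E] [CompleteSpace E] {ι : Type*}
  {L : ι → E →L[ℂ] ℂ}

lemma two_pi_I_inv_smul_circleIntegral_of_separating (hL : ∀ e, (∀ i, L i e = 0) → e = 0)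
    {Φ : ℂ → E} {c : ℂ} {R : ℝ} (hR : 0 ≤ R) (hΦ : ContinuousOn Φ (sphere c R))
    (hd : ∀ i, DifferentiableOn ℂ (fun z => L i (Φ z)) (closedBall c R)) {w : ℂ}
    (hw : w ∈ ball c R) :
    (2 * π * I : ℂ)⁻¹ • ∮ z in C(c, R), (z - w)⁻¹ • Φ z = Φ w := by
  have hint : CircleIntegrable (fun z => (z - w)⁻¹ • Φ z) c R := by
    refine ContinuousOn.circleIntegrable hR (.smul (.inv₀ (by fun_prop) fun z hz hzw => ?_) hΦ)
    exact (mem_ball.1 hw).ne (sub_eq_zero.1 hzw ▸ mem_sphere.1 hz)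
  rw [← sub_eq_zero]
  refine hL _ fun i => ?_
  have hcomm : L i (∮ z in C(c, R), (z - w)⁻¹ • Φ z) = ∮ z in C(c, R), (z - w)⁻¹ • L i (Φ z) := by
    unfold circleIntegral
    rw [← ContinuousLinearMap.intervalIntegral_comp_comm _ hint.out]
    simp only [map_smul]
  rw [map_sub, map_smul, hcomm, (hd i).circleIntegral_sub_inv_smul hw,
    inv_smul_smul₀ Complex.two_pi_I_ne_zero, sub_self]

lemma differentiableOn_of_separating (hL : ∀ e, (∀ i, L i e = 0) → e = 0) {Ω : Set ℂ}
    (hΩ : IsOpen Ω) {Φ : ℂ → E} (hΦ : ContinuousOn Φ Ω)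
    (hd : ∀ i, DifferentiableOn ℂ (fun z => L i (Φ z)) Ω) : DifferentiableOn ℂ Φ Ω := by
  intro c hc
  obtain ⟨R, hR, hball⟩ := Metric.nhds_basis_closedBall.mem_iff.1 (hΩ.mem_nhds hc)
  have hsphere : ContinuousOn Φ (sphere c R) := hΦ.mono (sphere_subset_closedBall.trans hball)
  have hcauchy := hasFPowerSeriesOn_cauchy_integral (R := ⟨R, hR.le⟩)
    (hsphere.circleIntegrable hR.le) (by exact_mod_cast hR)
  refine (hcauchy.hasFPowerSeriesAt.differentiableAt.congr_of_eventuallyEq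
    ?_).differentiableWithinAt
  filter_upwards [ball_mem_nhds c hR] with w hw
  exact (two_pi_I_inv_smul_circleIntegral_of_separating hL hR.le hsphere
    (fun i => (hd i).mono hball) hw).symm

lemma isHolomorphicJet_of_separating (hL : ∀ e, (∀ i, L i e = 0) → e = 0) {Ω : Set ℂ}
    (hΩ : IsOpen Ω) {n : ℕ} {F : ℕ → ℂ → E} (hF : ∀ k ≤ n, ContinuousOn (F k) Ω)
    (hLF : ∀ i, IsHolomorphicJet Ω n fun k z => L i (F k z)) : IsHolomorphicJet Ω n F := by
  have hd : ∀ k ≤ n, ∀ z ∈ Ω, DifferentiableAt ℂ (F k) z := fun k hk z hz =>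
    (differentiableOn_of_separating hL hΩ (hF k hk) fun i w hw =>
      ((hLF i).differentiableAt_of_le hk hw).differentiableWithinAt).differentiableAt
        (hΩ.mem_nhds hz)
  refine ⟨fun k hk z hz => ?_, hd n le_rfl⟩
  have hFk := (hd k hk.le z hz).hasDerivAt
  suffices F (k + 1) z = deriv (F k) z from this ▸ hFk
  rw [← sub_eq_zero]
  refine hL _ fun i => ?_
  rw [map_sub, sub_eq_zero]
  exact ((hLF i).hasDerivAt k hk z hz).unique ((L i).hasFDerivAt.comp_hasDerivAt z hFk)

lemma exists_vectorPolynomial_approx_of_separating (hL : ∀ e, (∀ i, L i e = 0) → e = 0)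
    {Ω : Set ℂ} {M : ℝ} (hΩ : IsApproximationDomain Ω M) {n : ℕ}
    (Φ : C(closure Ω × Fin (n + 1), E)) {F : ι → ℕ → ℂ → ℂ}
    (hF : ∀ i, IsHolomorphicJet Ω n (F i)) (hΦF : ∀ i x, x.1.1 ∈ Ω → L i (Φ x) = F i x.2 x.1)
    {ε : ℝ} (hε : 0 < ε) :
    ∃ p ∈ vectorPolynomials E, ∀ x, ‖Φ x - iteratedDeriv x.2 p x.1‖ < ε := by
  let Ψ : ℕ → ℂ → E := fun k z =>
    Function.extend (fun x : closure Ω × Fin (n + 1) => ((x.2 : ℕ), (x.1 : ℂ))) Φ 0 (k, z)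
  have hinj : Function.Injective fun x : closure Ω × Fin (n + 1) => ((x.2 : ℕ), (x.1 : ℂ)) :=
    fun x y hxy => Prod.ext (Subtype.ext (Prod.ext_iff.1 hxy).2) (Fin.ext (Prod.ext_iff.1 hxy).1)
  have hΨ : ∀ x : closure Ω × Fin (n + 1), Ψ x.2 x.1 = Φ x := fun x => hinj.extend_apply Φ 0 x
  have hΨc : ∀ k ≤ n, ContinuousOn (Ψ k) (closure Ω) := fun k hk => by
    rw [continuousOn_iff_continuous_domRestrict]
    have hcont : Continuous fun z : closure Ω => Φ (z, ⟨k, Nat.lt_succ_of_le hk⟩) := by fun_prop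
    exact hcont.congr fun z => (hΨ (z, ⟨k, Nat.lt_succ_of_le hk⟩)).symm
  have hjet : IsHolomorphicJet Ω n Ψ :=
    isHolomorphicJet_of_separating hL hΩ.isOpen (fun k hk => (hΨc k hk).mono subset_closure)
      fun i => (hF i).congr hΩ.isOpen fun k hk z hz => by
        let x : closure Ω × Fin (n + 1) := (⟨z, subset_closure hz⟩, ⟨k, Nat.lt_succ_of_le hk⟩)
        exact (congrArg (L i) (hΨ x)).trans (hΦF i x hz)
  obtain ⟨p, hp, hΨp⟩ := hjet.exists_vectorPolynomial_approx hΩ hΨc hε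
  exact ⟨p, hp, fun x => hΨ x ▸ hΨp x.2 (Nat.le_of_lt_succ x.2.2) x.1 x.1.2⟩

end SeparatingFunctionals

section Slices

variable {ι : Type*} {X : ι → Type*} [∀ i, TopologicalSpace (X i)]

/-- The span of the functions `∏ i ∈ s, a i (x i)` with `a i` in the prescribed class `A i`. -/
noncomputable def productSpan (A : ∀ i, Set C(X i, ℂ)) (s : Finset ι) :
    Submodule ℂ C(∀ i, X i, ℂ) :=
  Submodule.span ℂ {h | ∃ a : ∀ i, C(X i, ℂ), (∀ i ∈ s, a i ∈ A i) ∧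
    h = ∏ i ∈ s, (a i).comp (ContinuousMap.eval i)}

variable [DecidableEq ι]

/-- The partial function `x ↦ J y`, where `y` has the coordinates of `x` in `s` and those of the
parameter `b` outside `s`, as a continuous function of `b`. -/
noncomputable def slice (J : C(∀ i, X i, ℂ)) (s : Finset ι) : C(∀ i, X i, C(∀ i, X i, ℂ)) :=
  ContinuousMap.curry ⟨fun p : (∀ i, X i) × (∀ i, X i) => J (s.piecewise p.2 p.1), by
    refine J.continuous.comp (continuous_pi fun i => ?_)
    by_cases hi : i ∈ s
    · simp only [hi, Finset.piecewise_eq_of_mem]; fun_prop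
    · simp only [hi, not_false_iff, Finset.piecewise_eq_of_notMem]; fun_prop⟩

lemma slice_apply (J : C(∀ i, X i, ℂ)) (s : Finset ι) (b x : ∀ i, X i) :
    slice J s b x = J (s.piecewise x b) := rfl

variable [∀ i, CompactSpace (X i)]

lemma comp_eval_mul_mem_topologicalClosure_productSpan {A : ∀ i, Set C(X i, ℂ)} {s : Finset ι}
    {i : ι} (hi : i ∉ s) {a : C(X i, ℂ)} (ha : a ∈ A i) {e : C(∀ i, X i, ℂ)}
    (he : e ∈ (productSpan A s).topologicalClosure) :
    a.comp (ContinuousMap.eval i) * e ∈ (productSpan A (insert i s)).topologicalClosure := by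
  refine map_mem_closure (continuous_const_mul _) he fun e he => ?_
  refine (Submodule.span_le.2 ?_ : productSpan A s ≤ (productSpan A (insert i s)).comap
    (LinearMap.mulLeft ℂ (a.comp (ContinuousMap.eval i)))) he
  rintro _ ⟨a', ha', rfl⟩
  have hne : ∀ j ∈ s, j ≠ i := fun j hj hji => hi (hji ▸ hj)
  refine Submodule.subset_span ⟨Function.update a' i a, fun j hj => ?_, ?_⟩
  · rcases Finset.mem_insert.1 hj with rfl | hj
    · simpa using ha
    · simpa only [Function.update_of_ne (hne j hj)] using ha' j hj
  · rw [Finset.prod_insert hi, Function.update_self, LinearMap.mulLeft_apply]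
    congr 1
    exact Finset.prod_congr rfl fun j hj => by rw [Function.update_of_ne (hne j hj)]

/-- Induction over the number of free variables: it suffices to release one more variable at a
time, with the remaining variables in a dense set. -/
lemma mem_topologicalClosure_productSpan_of_slice [Fintype ι] {A : ∀ i, Set C(X i, ℂ)}
    {D : Set (∀ i, X i)} (hD : Dense D) (J : C(∀ i, X i, ℂ))
    (hstep : ∀ s i, i ∉ s → (∀ b, slice J s b ∈ (productSpan A s).topologicalClosure) →
      ∀ b ∈ D, slice J (insert i s) b ∈ (productSpan A (insert i s)).topologicalClosure) :
    J ∈ (productSpan A Finset.univ).topologicalClosure := by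
  have hslice : ∀ s b, slice J s b ∈ (productSpan A s).topologicalClosure := by
    intro s
    induction s using Finset.induction_on with
    | empty =>
      intro b
      have hconst : slice J ∅ b = J b • (1 : C(∀ i, X i, ℂ)) := by
        ext x
        simp [slice_apply]
      rw [hconst]
      refine Submodule.le_topologicalClosure _ (Submodule.smul_mem _ _ ?_)
      exact Submodule.subset_span ⟨0, by simp, by simp⟩
    | insert i s hi ih =>
      have hclosed := (productSpan A (insert i s)).isClosed_topologicalClosure.preimage
        (slice J (insert i s)).continuous
      exact fun b => hclosed.closure_subset_iff.2 (hstep s i hi ih) (hD b)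
  rcases isEmpty_or_nonempty (∀ i, X i) with _ | ⟨⟨b⟩⟩
  · rw [show J = 0 from ContinuousMap.ext fun x => isEmptyElim x]
    exact zero_mem _
  · have huniv : slice J Finset.univ b = J := by
      ext x
      simp [slice_apply]
    exact huniv ▸ hslice Finset.univ b

end Slices

section ProductJets

/-- The jet of order `n` of a polynomial, as a function on `closure Ω × Fin (n + 1)`: the second
component of the variable is the order of differentiation. -/
noncomputable def polynomialJet (Ω : Set ℂ) (n : ℕ) (q : Polynomial ℂ) :
    C(closure Ω × Fin (n + 1), ℂ) :=
  ⟨fun x => (Polynomial.derivative^[x.2] q).eval x.1, by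
    rw [continuous_prod_of_discrete_right]
    exact fun k => (Polynomial.derivative^[k] q).continuous.comp continuous_subtype_val⟩

variable {ι : Type*} {Ω : ι → Set ℂ} {n : ℕ}

lemma dense_setOf_forall_fst_mem :
    Dense {x : ∀ i, closure (Ω i) × Fin (n + 1) | ∀ i, ((x i).1 : ℂ) ∈ Ω i} := by
  have hpi : {x : ∀ i, closure (Ω i) × Fin (n + 1) | ∀ i, ((x i).1 : ℂ) ∈ Ω i} =
      Set.pi univ fun i => Prod.fst ⁻¹' ((↑) ⁻¹' Ω i : Set (closure (Ω i))) := by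
    ext x
    simp
  rw [hpi]
  refine dense_pi univ fun i _ => .preimage ?_ isOpenMap_fst
  rw [Subtype.dense_iff, Subtype.image_preimage_coe, inter_eq_right.2 subset_closure]

/-- The closed span of the products of jets of polynomials in the variables from `s`. -/
noncomputable def jetSpan (Ω : ι → Set ℂ) (n : ℕ) (s : Finset ι) :
    Submodule ℂ C(∀ i, closure (Ω i) × Fin (n + 1), ℂ) :=
  (productSpan (fun i => range (polynomialJet (Ω i) n)) s).topologicalClosure

variable [DecidableEq ι] [∀ i, CompactSpace (closure (Ω i))]

lemma exists_mem_jetSpan_of_mem_vectorPolynomials {s : Finset ι} {i : ι} (hi : i ∉ s)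
    {p : ℂ → jetSpan Ω n s} (hp : p ∈ vectorPolynomials (jetSpan Ω n s)) :
    ∃ e ∈ jetSpan Ω n (insert i s), ∀ x,
      e x = (iteratedDeriv (x i).2 p ((x i).1 : ℂ)).1 x := by
  induction hp using Submodule.span_induction with
  | mem _ hq =>
    obtain ⟨q, e, rfl⟩ := hq
    refine ⟨_, comp_eval_mul_mem_topologicalClosure_productSpan hi (mem_range_self q) e.2, ?_⟩
    intro x
    rw [iteratedDeriv_eval_smul]
    rfl
  | zero => exact ⟨0, zero_mem _, fun x => by simp⟩
  | add p r hp hr ihp ihr =>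
    obtain ⟨e, he, hep⟩ := ihp
    obtain ⟨d, hd, hdr⟩ := ihr
    refine ⟨e + d, add_mem he hd, fun x => ?_⟩
    rw [iteratedDeriv_add ((contDiff_of_mem_vectorPolynomials hp).of_le le_top).contDiffAt
      ((contDiff_of_mem_vectorPolynomials hr).of_le le_top).contDiffAt]
    simp [hep, hdr]
  | smul c p _ ihp =>
    obtain ⟨e, he, hep⟩ := ihp
    refine ⟨c • e, Submodule.smul_mem _ _ he, fun x => ?_⟩
    rw [iteratedDeriv_const_smul_field]
    simp [hep]

/-- `Jf z α` plays the role of the mixed derivative of order `α` at `z` of a function which is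
`n` times holomorphically differentiable in each variable. -/
def IsSeparateJet (Ω : ι → Set ℂ) (n : ℕ) (Jf : (ι → ℂ) → (ι → ℕ) → ℂ) : Prop :=
  ∀ z, (∀ i, z i ∈ Ω i) → ∀ α, (∀ i, α i ≤ n) → ∀ i,
    IsHolomorphicJet (Ω i) n fun k w => Jf (Function.update z i w) (Function.update α i k)

variable {Jf : (ι → ℂ) → (ι → ℕ) → ℂ} {J : C(∀ i, closure (Ω i) × Fin (n + 1), ℂ)}

lemma IsSeparateJet.slice_insert_mem_jetSpan (hJf : IsSeparateJet Ω n Jf)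
    (hJ : ∀ x, (∀ i, ((x i).1 : ℂ) ∈ Ω i) → J x = Jf (fun i => (x i).1) fun i => (x i).2)
    {s : Finset ι} {i : ι} (hi : i ∉ s) {M : ℝ} (hΩ : IsApproximationDomain (Ω i) M)
    (hs : ∀ b, slice J s b ∈ jetSpan Ω n s) {b : ∀ i, closure (Ω i) × Fin (n + 1)}
    (hb : ∀ i, ((b i).1 : ℂ) ∈ Ω i) : slice J (insert i s) b ∈ jetSpan Ω n (insert i s) := by
  have : CompleteSpace (jetSpan Ω n s) :=
    (Submodule.isClosed_topologicalClosure _).completeSpace_coe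
  let Φ : C(closure (Ω i) × Fin (n + 1), jetSpan Ω n s) :=
    ⟨fun y => ⟨slice J s (Function.update b i y), hs _⟩, by fun_prop⟩
  let L : {x : ∀ i, closure (Ω i) × Fin (n + 1) | ∀ i, ((x i).1 : ℂ) ∈ Ω i} →
      jetSpan Ω n s →L[ℂ] ℂ :=
    fun x => (ContinuousMap.evalCLM ℂ x.1).comp (jetSpan Ω n s).subtypeL
  have hL : ∀ e, (∀ x, L x e = 0) → e = 0 := fun e he =>
    Subtype.ext <| DFunLike.coe_injective <| Continuous.ext_on dense_setOf_forall_fst_mem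
      (map_continuous _) (map_continuous _) fun x hx => he ⟨x, hx⟩
  have hpiecewise : ∀ x y, s.piecewise x (Function.update b i y) =
      Function.update (s.piecewise x b) i y := fun x y =>
    (Finset.update_piecewise_of_notMem s x b hi y).symm
  have hmem : ∀ x : {x : ∀ i, closure (Ω i) × Fin (n + 1) | ∀ i, ((x i).1 : ℂ) ∈ Ω i},
      ∀ j, ((s.piecewise x.1 b j).1 : ℂ) ∈ Ω j := fun x j => by
    by_cases hj : j ∈ s
    · simpa only [Finset.piecewise_eq_of_mem _ _ _ hj] using x.2 j
    · simpa only [Finset.piecewise_eq_of_notMem _ _ _ hj] using hb j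
  have hΦ : ∀ x y, y.1.1 ∈ Ω i → L x (Φ y) =
      Jf (Function.update (fun j => ((s.piecewise x.1 b j).1 : ℂ)) i y.1)
        (Function.update (fun j => ((s.piecewise x.1 b j).2 : ℕ)) i y.2) := fun x y hy => by
    have hupdate := hJ (Function.update (s.piecewise x.1 b) i y) fun j => by
      rcases eq_or_ne j i with rfl | hj
      · simpa only [Function.update_self] using hy
      · simpa only [Function.update_of_ne hj] using hmem x j
    change J (s.piecewise x.1 (Function.update b i y)) = _
    rw [hpiecewise, hupdate]
    congr 1 <;> ext j <;> rcases eq_or_ne j i with rfl | hj <;> simp [*]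
  refine (Submodule.isClosed_topologicalClosure _).closure_subset (Metric.mem_closure_iff.2 ?_)
  intro ε hε
  obtain ⟨p, hp, hΦp⟩ := exists_vectorPolynomial_approx_of_separating hL hΩ Φ
    (fun x => hJf _ (hmem x) _ (fun j => Nat.le_of_lt_succ (s.piecewise x.1 b j).2.2) i)
    hΦ (half_pos hε)
  obtain ⟨e, he, hep⟩ := exists_mem_jetSpan_of_mem_vectorPolynomials hi hp
  refine ⟨e, he, ?_⟩
  refine lt_of_le_of_lt ((ContinuousMap.dist_le (half_pos hε).le).2 fun x => ?_) (half_lt_self hε)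
  rw [dist_eq_norm, hep, slice_apply, Finset.piecewise_insert, ← hpiecewise]
  exact (ContinuousMap.norm_coe_le_norm (Φ (x i) - iteratedDeriv (x i).2 p (x i).1).1 x).trans
    (hΦp (x i)).le

theorem IsSeparateJet.mem_jetSpan_univ [Fintype ι] (hJf : IsSeparateJet Ω n Jf)
    (hJ : ∀ x, (∀ i, ((x i).1 : ℂ) ∈ Ω i) → J x = Jf (fun i => (x i).1) fun i => (x i).2)
    {M : ι → ℝ} (hΩ : ∀ i, IsApproximationDomain (Ω i) (M i)) : J ∈ jetSpan Ω n Finset.univ :=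
  mem_topologicalClosure_productSpan_of_slice dense_setOf_forall_fst_mem J
    fun _ i hi hs _ hb => hJf.slice_insert_mem_jetSpan hJ hi (hΩ i) hs hb

end ProductJets

section SeparatelyHolomorphic

lemma norm_dslope_sub_deriv_le {φ : ℂ → ℂ} {c w : ℂ} {R C : ℝ}
    (hφ : DifferentiableOn ℂ φ (ball c R)) (hC : ∀ z ∈ ball c R, ‖φ z‖ ≤ C) (hw : w ∈ ball c R) :
    ‖dslope φ c w - deriv φ c‖ ≤ 4 * C / R ^ 2 * ‖w - c‖ := by
  have hc : c ∈ ball c R := mem_ball_self (nonempty_ball.1 ⟨w, hw⟩)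
  have hball : ball c R ∈ 𝓝 c := isOpen_ball.mem_nhds hc
  have hslope : ∀ z ∈ ball c R, ‖dslope φ c z‖ ≤ 2 * C / R := fun z hz => by
    refine Complex.norm_dslope_le_div_of_mapsTo_ball hφ (fun y hy => ?_) hz
    rw [mem_closedBall, dist_eq_norm]
    linarith [norm_sub_le (φ y) (φ c), hC y hy, hC c hc]
  have hmaps : MapsTo (dslope φ c) (ball c R) (closedBall (dslope φ c c) (4 * C / R)) := by
    intro z hz
    rw [mem_closedBall, dist_eq_norm]
    refine (norm_sub_le _ _).trans ((add_le_add (hslope z hz) (hslope c hc)).trans_eq ?_)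
    ring
  have hschwarz := Complex.dist_le_div_mul_dist_of_mapsTo_ball
    ((Complex.differentiableOn_dslope hball).2 hφ) hmaps hw
  rw [dist_eq_norm, dist_eq_norm, dslope_same] at hschwarz
  refine hschwarz.trans_eq ?_
  ring

variable {m : ℕ} {u v : (Fin m → ℂ) → ℂ} {U : Set (Fin m → ℂ)} {z : Fin m → ℂ}

/-- Continuous functions of several complex variables that are holomorphic in each variable. -/
structure IsSeparatelyHolomorphicOn (u : (Fin m → ℂ) → ℂ) (U : Set (Fin m → ℂ)) : Prop where
  continuousOn : ContinuousOn u U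
  differentiableAt : ∀ z ∈ U, ∀ i, DifferentiableAt ℂ (fun w => u (Function.update z i w)) (z i)

/-- The difference quotient of `u` in the `i`-th variable with increment `h`. -/
noncomputable def differenceQuotient (i : Fin m) (u : (Fin m → ℂ) → ℂ) (h : ℂ) :
    (Fin m → ℂ) → ℂ :=
  fun z => h⁻¹ * (u (z + Pi.single i h) - u z)

lemma update_add_const (z v : Fin m → ℂ) (i : Fin m) (w : ℂ) :
    Function.update z i w + v = Function.update (z + v) i (w + v i) := by
  rw [Function.update_add, Function.update_eq_self]

lemma update_add_self (z : Fin m → ℂ) (i : Fin m) (h : ℂ) :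
    Function.update z i (z i + h) = z + Pi.single i h := by
  simpa only [Function.update_eq_self, add_zero, zero_add, Pi.single] using
    Function.update_add z 0 i (z i) h

lemma dist_update_self (z : Fin m → ℂ) (i : Fin m) (w : ℂ) :
    dist (Function.update z i w) z = dist w (z i) := by
  rw [← add_sub_cancel (z i) w, update_add_self, dist_self_add_left, dist_self_add_left,
    Pi.norm_single]

lemma mapsTo_update_ball (z : Fin m → ℂ) (i : Fin m) (r : ℝ) :
    MapsTo (Function.update z i) (ball (z i) r) (ball z r) := fun w hw => by
  rwa [mem_ball, dist_update_self]

lemma update_mem_ball {r s : ℝ} {z₀ : Fin m → ℂ} (hz : z ∈ ball z₀ r) {i : Fin m} {w : ℂ}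
    (hw : w ∈ ball (z i) s) : Function.update z i w ∈ ball z₀ (r + s) := by
  have hw' := mem_ball.1 (mapsTo_update_ball z i s hw)
  rw [mem_ball] at hz ⊢
  linarith [dist_triangle (Function.update z i w) z z₀]

lemma partialDeriv_comp_add_const (i : Fin m) (u : (Fin m → ℂ) → ℂ) (v z : Fin m → ℂ) :
    partialDeriv i (fun z => u (z + v)) z = partialDeriv i u (z + v) := by
  simp only [partialDeriv, update_add_const]
  exact deriv_comp_add_const (f := fun w => u (Function.update (z + v) i w)) (v i) (z i)

lemma partialDeriv_congr (hU : IsOpen U) (huv : EqOn u v U) (i : Fin m) :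
    EqOn (partialDeriv i u) (partialDeriv i v) U := by
  intro z hz
  have hcont : Continuous fun w => Function.update z i w := continuous_const.update i continuous_id
  have hslice : Tendsto (Function.update z i) (𝓝 (z i)) (𝓝 z) :=
    hcont.tendsto' (z i) z (Function.update_eq_self i z)
  have heq : (fun w => u (Function.update z i w)) =ᶠ[𝓝 (z i)] fun w => v (Function.update z i w) :=
    (hslice.eventually_mem (hU.mem_nhds hz)).mono fun w hw => huv hw
  exact heq.deriv_eq

namespace IsSeparatelyHolomorphicOn

lemma hasDerivAt_partialDeriv (hu : IsSeparatelyHolomorphicOn u U) (hz : z ∈ U) (i : Fin m) :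
    HasDerivAt (fun w => u (Function.update z i w)) (partialDeriv i u z) (z i) :=
  (hu.differentiableAt z hz i).hasDerivAt

lemma differentiableOn_slice (hu : IsSeparatelyHolomorphicOn u U) {i : Fin m} {s : Set ℂ}
    (hs : MapsTo (Function.update z i) s U) :
    DifferentiableOn ℂ (fun w => u (Function.update z i w)) s := fun w hw => by
  simpa only [Function.update_idem, Function.update_self] using
    (hu.differentiableAt _ (hs hw) i).differentiableWithinAt

lemma mono (hu : IsSeparatelyHolomorphicOn u U) {V : Set (Fin m → ℂ)} (hVU : V ⊆ U) :
    IsSeparatelyHolomorphicOn u V :=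
  ⟨hu.continuousOn.mono hVU, fun z hz => hu.differentiableAt z (hVU hz)⟩

lemma comp_add_const (hu : IsSeparatelyHolomorphicOn u U) {V : Set (Fin m → ℂ)} {v : Fin m → ℂ}
    (hV : MapsTo (· + v) V U) : IsSeparatelyHolomorphicOn (fun z => u (z + v)) V := by
  refine ⟨hu.continuousOn.comp (by fun_prop) hV, fun z hz i => ?_⟩
  simp only [update_add_const]
  exact ((hu.hasDerivAt_partialDeriv (hV hz) i).comp_add_const (z i) (v i)).differentiableAt

end IsSeparatelyHolomorphicOn

lemma isSeparatelyHolomorphicOn_differenceQuotient (hu : IsSeparatelyHolomorphicOn u U)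
    {V : Set (Fin m → ℂ)} (hVU : V ⊆ U) {i : Fin m} {h : ℂ} (hV : MapsTo (· + Pi.single i h) V U) :
    IsSeparatelyHolomorphicOn (differenceQuotient i u h) V where
  continuousOn :=
    continuousOn_const.mul ((hu.comp_add_const hV).continuousOn.sub (hu.mono hVU).continuousOn)
  differentiableAt z hz j :=
    (((hu.comp_add_const hV).differentiableAt z hz j).sub
      ((hu.mono hVU).differentiableAt z hz j)).const_mul _

lemma norm_partialDeriv_sub_differenceQuotient_le {z₀ : Fin m → ℂ} {r C : ℝ}
    (hu : IsSeparatelyHolomorphicOn u (ball z₀ (r + r)))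
    (hC : ∀ z ∈ ball z₀ (r + r), ‖u z‖ ≤ C) (hz : z ∈ ball z₀ r) (i : Fin m) {h : ℂ} (h0 : h ≠ 0)
    (hr : ‖h‖ < r) :
    ‖differenceQuotient i u h z - partialDeriv i u z‖ ≤ 4 * C / r ^ 2 * ‖h‖ := by
  have hmaps : MapsTo (Function.update z i) (ball (z i) r) (ball z₀ (r + r)) :=
    fun w hw => update_mem_ball hz hw
  have hslope := norm_dslope_sub_deriv_le (hu.differentiableOn_slice hmaps)
    (fun w hw => hC _ (hmaps hw)) (w := z i + h) (by simpa using hr)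
  rw [dslope_of_ne _ (by simpa using h0), slope_def_field, add_sub_cancel_left, update_add_self,
    Function.update_eq_self, div_eq_inv_mul] at hslope
  exact hslope

lemma exists_tendstoUniformlyOn_differenceQuotient (hu : IsSeparatelyHolomorphicOn u U)
    (hU : IsOpen U) (hz : z ∈ U) (i : Fin m) :
    ∃ r > 0, (∀ᶠ h in 𝓝[≠] 0, IsSeparatelyHolomorphicOn (differenceQuotient i u h) (ball z r)) ∧
      TendstoUniformlyOn (differenceQuotient i u) (partialDeriv i u) (𝓝[≠] 0) (ball z r) := by
  obtain ⟨R, hR, hball⟩ := Metric.nhds_basis_closedBall.mem_iff.1 (hU.mem_nhds hz)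
  obtain ⟨C, hC⟩ := (isCompact_closedBall z R).exists_bound_of_continuousOn
    (hu.continuousOn.mono hball)
  obtain ⟨r, hr, rfl⟩ : ∃ r > 0, r + r = R := ⟨R / 2, half_pos hR, add_halves R⟩
  have hur := hu.mono (ball_subset_closedBall.trans hball)
  have hsmall : ∀ᶠ h : ℂ in 𝓝[≠] 0, h ≠ 0 ∧ ‖h‖ < r := by
    filter_upwards [self_mem_nhdsWithin, mem_nhdsWithin_of_mem_nhds (ball_mem_nhds 0 hr)]
      with h h0 hh using ⟨h0, by simpa using hh⟩
  refine ⟨r, hr, ?_, ?_⟩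
  · filter_upwards [hsmall] with h hh
    refine isSeparatelyHolomorphicOn_differenceQuotient hur (ball_subset_ball (by linarith))
      fun w hw => ?_
    simpa only [update_add_self] using
      update_mem_ball hw (show w i + h ∈ ball (w i) r by simpa using hh.2)
  · refine Metric.tendstoUniformlyOn_iff.2 fun ε hε => ?_
    have hlim : Tendsto (fun h : ℂ => 4 * C / r ^ 2 * ‖h‖) (𝓝[≠] 0) (𝓝 0) := by
      have := (continuous_const.mul continuous_norm : Continuous fun h : ℂ => 4 * C / r ^ 2 * ‖h‖)
      exact (this.tendsto' 0 0 (by simp)).mono_left nhdsWithin_le_nhds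
    filter_upwards [hsmall, hlim.eventually_lt_const hε] with h hh hlt w hw
    rw [dist_comm, dist_eq_norm]
    exact (norm_partialDeriv_sub_differenceQuotient_le hur
      (fun y hy => hC y (ball_subset_closedBall hy)) hw i hh.1 hh.2).trans_lt hlt

lemma isSeparatelyHolomorphicOn_partialDeriv (hu : IsSeparatelyHolomorphicOn u U) (hU : IsOpen U)
    (i : Fin m) : IsSeparatelyHolomorphicOn (partialDeriv i u) U := by
  refine ⟨fun z hz => ?_, fun z hz j => ?_⟩ <;>
    obtain ⟨r, hr, hhol, hlim⟩ := exists_tendstoUniformlyOn_differenceQuotient hu hU hz i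
  · have hcont := hlim.continuousOn (hhol.mono fun h hh => hh.continuousOn).frequently
    exact (hcont.continuousAt (ball_mem_nhds z hr)).continuousWithinAt
  · have hmaps := mapsTo_update_ball z j r
    have hslice := ((hlim.comp (Function.update z j)).mono hmaps).tendstoLocallyUniformlyOn
    exact (hslice.differentiableOn (hhol.mono fun h hh => hh.differentiableOn_slice hmaps)
      isOpen_ball).differentiableAt (ball_mem_nhds _ hr)

lemma partialDeriv_differenceQuotient (hu : IsSeparatelyHolomorphicOn u U) (i j : Fin m) {h : ℂ}
    (hz : z ∈ U) (hzh : z + Pi.single i h ∈ U) :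
    partialDeriv j (differenceQuotient i u h) z =
      differenceQuotient i (partialDeriv j u) h z := by
  have hshift := (hu.comp_add_const (V := {z}) (v := Pi.single i h) (by simpa using hzh))
  refine ((((hshift.hasDerivAt_partialDeriv rfl j).sub
    (hu.hasDerivAt_partialDeriv hz j)).const_mul h⁻¹).deriv).trans ?_
  rw [partialDeriv_comp_add_const, differenceQuotient]

/-- Differentiating the uniformly convergent difference quotients in the other variable. -/
lemma partialDeriv_comm (hu : IsSeparatelyHolomorphicOn u U) (hU : IsOpen U) (i j : Fin m) :
    EqOn (partialDeriv i (partialDeriv j u)) (partialDeriv j (partialDeriv i u)) U := by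
  intro z hz
  obtain ⟨r, hr, hhol, hlim⟩ := exists_tendstoUniformlyOn_differenceQuotient hu hU hz i
  obtain ⟨s, hs, -, hlim'⟩ := exists_tendstoUniformlyOn_differenceQuotient
    (isSeparatelyHolomorphicOn_partialDeriv hu hU j) hU hz i
  have hmaps := mapsTo_update_ball z j r
  have hderiv := (((hlim.comp (Function.update z j)).mono hmaps).tendstoLocallyUniformlyOn.deriv
    (hhol.mono fun h hh => hh.differentiableOn_slice hmaps) isOpen_ball).tendsto_at
      (mem_ball_self hr)
  refine tendsto_nhds_unique ((hlim'.tendsto_at (mem_ball_self hs)).congr' ?_) hderiv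
  have hcont : Continuous fun h : ℂ => z + Pi.single i h :=
    continuous_const.add (continuous_single (A := fun _ : Fin m => ℂ) i)
  have hmem := (hcont.tendsto' 0 z (by simp)).eventually_mem (hU.mem_nhds hz)
  filter_upwards [mem_nhdsWithin_of_mem_nhds hmem] with h hh
  exact (partialDeriv_differenceQuotient hu i j hz hh).symm

lemma mixedDeriv_cons (i : Fin m) (l : List (Fin m)) (u : (Fin m → ℂ) → ℂ) :
    mixedDeriv (i :: l) u = partialDeriv i (mixedDeriv l u) := rfl

lemma isSeparatelyHolomorphicOn_mixedDeriv (hu : IsSeparatelyHolomorphicOn u U) (hU : IsOpen U) :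
    ∀ l, IsSeparatelyHolomorphicOn (mixedDeriv l u) U
  | [] => hu
  | i :: l => isSeparatelyHolomorphicOn_partialDeriv
      (isSeparatelyHolomorphicOn_mixedDeriv hu hU l) hU i

lemma mixedDeriv_eqOn_of_perm (hu : IsSeparatelyHolomorphicOn u U) (hU : IsOpen U)
    {l l' : List (Fin m)} (hl : l.Perm l') : EqOn (mixedDeriv l u) (mixedDeriv l' u) U := by
  induction hl with
  | nil => exact fun _ _ => rfl
  | cons i _ ih => exact partialDeriv_congr hU ih i
  | swap i j l => exact partialDeriv_comm (isSeparatelyHolomorphicOn_mixedDeriv hu hU l) hU j i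
  | trans _ _ ih ih' => exact ih.trans ih'

end SeparatelyHolomorphic

section MultivariatePolynomials

variable {m : ℕ}

lemma hasDerivAt_eval_update (P : MvPolynomial (Fin m) ℂ) (i : Fin m) (z : Fin m → ℂ) :
    HasDerivAt (fun w => MvPolynomial.eval (Function.update z i w) P)
      (MvPolynomial.eval z (MvPolynomial.pderiv i P)) (z i) := by
  induction P using MvPolynomial.induction_on with
  | C a => simpa using hasDerivAt_const (z i) a
  | add p q hp hq =>
    simp only [map_add]
    exact hp.add hq
  | mul_X p j hp =>
    have hX := hasDerivAt_pi.1 (hasDerivAt_update z i (z i)) j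
    have hpX := hp.mul hX
    simp only [map_mul, MvPolynomial.eval_X, Derivation.leibniz, map_add, smul_eq_mul,
      MvPolynomial.pderiv_X]
    refine hpX.congr_deriv ?_
    rcases eq_or_ne j i with rfl | hj
    · simp; ring
    · simp [hj]; ring

lemma partialDeriv_eval (i : Fin m) (P : MvPolynomial (Fin m) ℂ) :
    partialDeriv i (fun w => MvPolynomial.eval w P) =
      fun z => MvPolynomial.eval z (MvPolynomial.pderiv i P) :=
  funext fun z => (hasDerivAt_eval_update P i z).deriv

/-- The mixed partial derivative of a polynomial in the directions listed in `l`, as a linear map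
on polynomials. -/
noncomputable def mixedPDeriv (l : List (Fin m)) :
    MvPolynomial (Fin m) ℂ →ₗ[ℂ] MvPolynomial (Fin m) ℂ :=
  l.foldr (fun i D => (MvPolynomial.pderiv i).toLinearMap ∘ₗ D) LinearMap.id

lemma mixedDeriv_eval (l : List (Fin m)) (P : MvPolynomial (Fin m) ℂ) :
    mixedDeriv l (fun w => MvPolynomial.eval w P) =
      fun z => MvPolynomial.eval z (mixedPDeriv l P) := by
  induction l with
  | nil => rfl
  | cons i l ih =>
    rw [mixedDeriv_cons, ih, partialDeriv_eval]
    rfl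

lemma partialDeriv_prod_eval (i : Fin m) (q : Fin m → Polynomial ℂ) :
    partialDeriv i (fun w => ∏ j, (q j).eval (w j)) =
      fun z => ∏ j, (Function.update q i (Polynomial.derivative (q i)) j).eval (z j) := by
  funext z
  have hprod : ∀ (r : Polynomial ℂ) w,
      ∏ j, (Function.update q i r j).eval (Function.update z i w j) =
        r.eval w * ∏ j ∈ Finset.univ.erase i, (q j).eval (z j) := fun r w => by
    rw [← Finset.mul_prod_erase _ _ (Finset.mem_univ i), Function.update_self, Function.update_self]
    congr 1
    refine Finset.prod_congr rfl fun j hj => ?_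
    rw [Function.update_of_ne (Finset.ne_of_mem_erase hj),
      Function.update_of_ne (Finset.ne_of_mem_erase hj)]
  have hderiv := (((q i).hasDerivAt (z i)).mul_const
    (∏ j ∈ Finset.univ.erase i, (q j).eval (z j))).deriv
  simp only [← hprod, Function.update_eq_self] at hderiv
  exact hderiv

lemma mixedDeriv_prod_eval (q : Fin m → Polynomial ℂ) (l : List (Fin m)) :
    mixedDeriv l (fun w => ∏ i, (q i).eval (w i)) =
      fun z => ∏ i, (Polynomial.derivative^[l.count i] (q i)).eval (z i) := by
  induction l with
  | nil => rfl
  | cons i l ih =>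
    have hupdate : Function.update (fun j => Polynomial.derivative^[l.count j] (q j)) i
        (Polynomial.derivative (Polynomial.derivative^[l.count i] (q i))) =
          fun j => Polynomial.derivative^[(i :: l).count j] (q j) := by
      ext1 j
      rcases eq_or_ne j i with rfl | hj
      · rw [Function.update_self, List.count_cons_self, Function.iterate_succ_apply']
      · rw [Function.update_of_ne hj, List.count_cons_of_ne hj.symm]
    rw [mixedDeriv_cons, ih, partialDeriv_prod_eval, hupdate]

lemma eval_prod_aeval_X (q : Fin m → Polynomial ℂ) (z : Fin m → ℂ) :
    MvPolynomial.eval z (∏ i, Polynomial.aeval (MvPolynomial.X i) (q i)) =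
      ∏ i, (q i).eval (z i) := by
  rw [map_prod]
  refine Finset.prod_congr rfl fun i _ => ?_
  have haeval := Polynomial.aeval_algHom_apply (MvPolynomial.aeval (R := ℂ) z)
    (MvPolynomial.X i) (q i)
  rw [MvPolynomial.aeval_X, Polynomial.coe_aeval_eq_eval] at haeval
  rw [← MvPolynomial.coe_aeval_eq_eval]
  exact haeval.symm

lemma exists_mvPolynomial_of_mem_productSpan {Ω : Fin m → Set ℂ} {n : ℕ}
    {e : C(∀ i, closure (Ω i) × Fin (n + 1), ℂ)}
    (he : e ∈ productSpan (fun i => range (polynomialJet (Ω i) n)) Finset.univ) :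
    ∃ P : MvPolynomial (Fin m) ℂ, ∀ (l : List (Fin m)) x, (∀ i, ((x i).2 : ℕ) = l.count i) →
      e x = mixedDeriv l (fun w => MvPolynomial.eval w P) fun i => (x i).1 := by
  simp only [mixedDeriv_eval]
  induction he using Submodule.span_induction with
  | mem e he =>
    obtain ⟨a, ha, rfl⟩ := he
    choose q hq using fun i => ha i (Finset.mem_univ i)
    refine ⟨∏ i, Polynomial.aeval (MvPolynomial.X i) (q i), fun l x hx => ?_⟩
    have hmixed := congrFun (mixedDeriv_eval l (∏ i, Polynomial.aeval (MvPolynomial.X i) (q i)))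
      fun i => (x i).1
    simp only [eval_prod_aeval_X, mixedDeriv_prod_eval, ← hx] at hmixed
    simpa [← hq, polynomialJet] using hmixed
  | zero => exact ⟨0, fun l x _ => by simp⟩
  | add e d _ _ ihe ihd =>
    obtain ⟨P, hP⟩ := ihe
    obtain ⟨Q, hQ⟩ := ihd
    exact ⟨P + Q, fun l x hx => by simp [hP l x hx, hQ l x hx]⟩
  | smul c e _ ih =>
    obtain ⟨P, hP⟩ := ih
    exact ⟨c • P, fun l x hx => by simp [hP l x hx]⟩

end MultivariatePolynomials

section MixedDerivatives

variable {m : ℕ}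

/-- A list of directions in which the direction `i` occurs `α i` times. -/
noncomputable def directionList (α : Fin m → ℕ) : List (Fin m) :=
  (Finsupp.toMultiset (Finsupp.equivFunOnFinite.symm α)).toList

lemma count_directionList (α : Fin m → ℕ) (i : Fin m) : (directionList α).count i = α i := by
  rw [← Multiset.coe_count, directionList, Multiset.coe_toList, Finsupp.count_toMultiset]
  rfl

lemma directionList_count_perm (l : List (Fin m)) : (directionList fun i => l.count i).Perm l :=
  List.perm_iff_count.2 (count_directionList _)

lemma cons_directionList_perm (α : Fin m → ℕ) (i : Fin m) (k : ℕ) :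
    (i :: directionList (Function.update α i k)).Perm
      (directionList (Function.update α i (k + 1))) := by
  refine List.perm_iff_count.2 fun j => ?_
  rcases eq_or_ne j i with rfl | hj
  · simp only [List.count_cons_self, count_directionList, Function.update_self]
  · simp only [List.count_cons_of_ne hj.symm, count_directionList, Function.update_of_ne hj]

variable {Ω : Fin m → Set ℂ} {n : ℕ} {f : (Fin m → ℂ) → ℂ}

lemma isSeparateJet_mixedDeriv (hΩ : ∀ i, IsOpen (Ω i))
    (hf : IsSeparatelyHolomorphicOn f (Set.pi univ Ω)) :
    IsSeparateJet Ω n fun z α => mixedDeriv (directionList α) f z := by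
  have hU : IsOpen (Set.pi univ Ω) := isOpen_set_pi finite_univ fun i _ => hΩ i
  intro z hz α _ i
  have hupdate : ∀ w ∈ Ω i, Function.update z i w ∈ Set.pi univ Ω := fun w hw =>
    (update_mem_pi_iff_of_mem fun j _ => hz j).2 fun _ => hw
  have hderiv : ∀ k, ∀ w ∈ Ω i, HasDerivAt
      (fun w => mixedDeriv (directionList (Function.update α i k)) f (Function.update z i w))
      (mixedDeriv (directionList (Function.update α i (k + 1))) f (Function.update z i w)) w := by
    intro k w hw
    rw [← mixedDeriv_eqOn_of_perm hf hU (cons_directionList_perm α i k) (hupdate w hw),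
      mixedDeriv_cons]
    simpa only [Function.update_idem, Function.update_self] using
      (isSeparatelyHolomorphicOn_mixedDeriv hf hU _).hasDerivAt_partialDeriv (hupdate w hw) i
  exact ⟨fun k _ => hderiv k, fun w hw => (hderiv n w hw).differentiableAt⟩

lemma exists_continuousMap_jet {G : (Fin m → ℕ) → (Fin m → ℂ) → ℂ}
    (hG : ∀ α, (∀ i, α i ≤ n) → ContinuousOn (G α) (Set.pi univ fun i => closure (Ω i))) :
    ∃ J : C(∀ i, closure (Ω i) × Fin (n + 1), ℂ),
      ∀ x, J x = G (fun i => (x i).2) fun i => (x i).1 := by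
  have hcont : Continuous fun y : (∀ i, closure (Ω i)) × (Fin m → Fin (n + 1)) =>
      G (fun i => y.2 i) fun i => y.1 i := by
    rw [continuous_prod_of_discrete_right]
    intro α
    exact (hG _ fun i => Nat.le_of_lt_succ (α i).2).comp_continuous
      (f := fun y : ∀ i, closure (Ω i) => fun i => (y i : ℂ)) (by fun_prop) fun y i _ => (y i).2
  exact ⟨⟨_, hcont.comp (f := fun x : ∀ i, closure (Ω i) × Fin (n + 1) =>
    (fun i => (x i).1, fun i => (x i).2)) (by fun_prop)⟩, fun _ => rfl⟩

lemma eqOn_closure_of_perm (hΩ : ∀ i, IsOpen (Ω i))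
    (hf : IsSeparatelyHolomorphicOn f (Set.pi univ Ω))
    {l l' : List (Fin m)} (hl : l.Perm l') {u v : (Fin m → ℂ) → ℂ}
    (hu : ContinuousOn u (Set.pi univ fun i => closure (Ω i)))
    (hv : ContinuousOn v (Set.pi univ fun i => closure (Ω i)))
    (huf : EqOn u (mixedDeriv l f) (Set.pi univ Ω))
    (hvf : EqOn v (mixedDeriv l' f) (Set.pi univ Ω)) :
    EqOn u v (Set.pi univ fun i => closure (Ω i)) := by
  have hU : IsOpen (Set.pi univ Ω) := isOpen_set_pi finite_univ fun i _ => hΩ i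
  have huv := (huf.trans (mixedDeriv_eqOn_of_perm hf hU hl)).trans hvf.symm
  exact huv.of_subset_closure hu hv (pi_mono fun _ _ => subset_closure) (closure_pi_set _ _).ge

lemma exists_mvPolynomial_jet_approx {M : Fin m → ℝ}
    (hΩ : ∀ i, IsApproximationDomain (Ω i) (M i))
    (hf : IsSeparatelyHolomorphicOn f (Set.pi univ Ω))
    {J : C(∀ i, closure (Ω i) × Fin (n + 1), ℂ)}
    (hJ : ∀ x, (∀ i, ((x i).1 : ℂ) ∈ Ω i) →
      J x = mixedDeriv (directionList fun i => (x i).2) f fun i => (x i).1) {ε : ℝ} (hε : 0 < ε) :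
    ∃ P : MvPolynomial (Fin m) ℂ, ∀ (l : List (Fin m)) x, (∀ i, ((x i).2 : ℕ) = l.count i) →
      ‖mixedDeriv l (fun w => MvPolynomial.eval w P) (fun i => (x i).1) - J x‖ < ε := by
  have : ∀ i, CompactSpace (closure (Ω i)) := fun i =>
    isCompact_iff_compactSpace.1 (hΩ i).isBounded.isCompact_closure
  have hmem := (isSeparateJet_mixedDeriv (fun i => (hΩ i).isOpen) hf).mem_jetSpan_univ hJ hΩ
  obtain ⟨e, he, hJe⟩ := Metric.mem_closure_iff.1 hmem ε hε
  obtain ⟨P, hP⟩ := exists_mvPolynomial_of_mem_productSpan he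
  refine ⟨P, fun l x hx => ?_⟩
  rw [← hP l x hx, ← dist_eq_norm, dist_comm]
  exact (ContinuousMap.dist_apply_le_dist x).trans_lt hJe

end MixedDerivatives

end Mergelyan

theorem stmt6_general {m n : ℕ} {Ω : Fin m → Set ℂ}
    (hΩo : ∀ i, IsOpen (Ω i)) (hΩb : ∀ i, Bornology.IsBounded (Ω i))
    (hreg : ∀ i, interior (closure (Ω i)) = Ω i)
    (hcc : ∀ i, IsConnected (closure (Ω i))ᶜ) {M : Fin m → ℝ}
    (hjoin : ∀ i, ∀ z ∈ Ω i, ∀ w ∈ Ω i, JoinedLe (Ω i) (M i) z w) {f : (Fin m → ℂ) → ℂ}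
    (hfd : ∀ z ∈ Set.pi Set.univ Ω, ∀ i : Fin m,
      DifferentiableAt ℂ (fun w => f (Function.update z i w)) (z i))
    {g : List (Fin m) → (Fin m → ℂ) → ℂ}
    (hgc : ∀ l : List (Fin m), (∀ i, l.count i ≤ n) →
      ContinuousOn (g l) (Set.pi Set.univ fun i => closure (Ω i)))
    (hgd : ∀ l : List (Fin m), (∀ i, l.count i ≤ n) →
      ∀ z ∈ Set.pi Set.univ Ω, g l z = mixedDeriv l f z) {ε : ℝ} (hε : 0 < ε) :
    ∃ P : MvPolynomial (Fin m) ℂ, ∀ l : List (Fin m), (∀ i, l.count i ≤ n) →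
      ∀ z ∈ Set.pi Set.univ fun i => closure (Ω i),
        ‖mixedDeriv l (fun w => MvPolynomial.eval w P) z - g l z‖ < ε := by
  have hf : Mergelyan.IsSeparatelyHolomorphicOn f (Set.pi Set.univ Ω) :=
    ⟨((hgc [] (by simp)).mono (Set.pi_mono fun _ _ => subset_closure)).congr
      fun z hz => (hgd [] (by simp) z hz).symm, hfd⟩
  have hcount : ∀ α : Fin m → ℕ, (∀ i, α i ≤ n) →
      ∀ i, (Mergelyan.directionList α).count i ≤ n := fun α hα i =>
    (Mergelyan.count_directionList α i).trans_le (hα i)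
  obtain ⟨J, hJ⟩ := Mergelyan.exists_continuousMap_jet fun α hα => hgc _ (hcount α hα)
  obtain ⟨P, hP⟩ := Mergelyan.exists_mvPolynomial_jet_approx
    (fun i => ⟨hΩo i, hΩb i, hreg i, hcc i, hjoin i⟩) hf (fun x hx => (hJ x).trans <|
      hgd _ (hcount _ fun i => Nat.le_of_lt_succ (x i).2.2) _ fun i _ => hx i) hε
  refine ⟨P, fun l hl z hz => ?_⟩
  have hperm := Mergelyan.eqOn_closure_of_perm hΩo hf (Mergelyan.directionList_count_perm l)
    (hgc _ (hcount _ hl)) (hgc l hl) (hgd _ (hcount _ hl)) (hgd l hl) hz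
  rw [← hperm]
  simpa only [hJ] using hP l
    (fun i => (⟨z i, hz i trivial⟩, ⟨l.count i, Nat.lt_succ_of_le (hl i)⟩)) fun _ => rfl

/-- **Polynomials are dense in `A^∞(Ω₁ × ⋯ × Ωₘ)`.** Let `Ω₁, …, Ωₘ ⊂ ℂ` be bounded domains
with `(closure Ωᵢ)° = Ωᵢ`, `ℂ \ closure Ωᵢ` connected, and a uniform bound `M` such that any two
points of each `Ωᵢ` can be joined in `Ωᵢ` by a path of length at most `M`. If `f` is continuous
on the product of the closures, separately holomorphic on `Ω₁ × ⋯ × Ωₘ`, and each mixed partial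
derivative of `f` extends continuously to the product of the closures (the extension
corresponding to the list of directions `l` being `g l`), then for every `n` and `ε > 0` there
is a polynomial `P(z₁, …, zₘ)` all of whose mixed partial derivatives of order at most `n` in
each variable are `ε`-close to the corresponding mixed partial derivatives of `f` on
`closure Ω₁ × ⋯ × closure Ωₘ`. -/
theorem stmt6 (m : ℕ) (Ω : Fin m → Set ℂ)
    (hΩo : ∀ i, IsOpen (Ω i)) (hΩc : ∀ i, IsConnected (Ω i))
    (hΩb : ∀ i, Bornology.IsBounded (Ω i))
    (hreg : ∀ i, interior (closure (Ω i)) = Ω i)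
    (hcc : ∀ i, IsConnected (closure (Ω i))ᶜ)
    (M : ℝ) (hjoin : ∀ i, ∀ z ∈ Ω i, ∀ w ∈ Ω i, JoinedLe (Ω i) M z w)
    (f : (Fin m → ℂ) → ℂ)
    (hfc : ContinuousOn f (Set.pi Set.univ fun i => closure (Ω i)))
    (hfd : ∀ z ∈ Set.pi Set.univ Ω, ∀ i : Fin m,
      DifferentiableAt ℂ (fun w => f (Function.update z i w)) (z i))
    (g : List (Fin m) → (Fin m → ℂ) → ℂ)
    (hgnil : ∀ z ∈ Set.pi Set.univ fun i => closure (Ω i), g [] z = f z)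
    (hgc : ∀ l, ContinuousOn (g l) (Set.pi Set.univ fun i => closure (Ω i)))
    (hgd : ∀ l, ∀ z ∈ Set.pi Set.univ Ω, g l z = mixedDeriv l f z) :
    ∀ n : ℕ, ∀ ε > 0, ∃ P : MvPolynomial (Fin m) ℂ,
      ∀ l : List (Fin m), (∀ i, l.count i ≤ n) →
        ∀ z ∈ Set.pi Set.univ fun i => closure (Ω i),
          ‖mixedDeriv l (fun w => MvPolynomial.eval w P) z - g l z‖ < ε :=
  fun _ _ => stmt6_general hΩo hΩb hreg hcc hjoin hfd (fun l _ => hgc l) fun l _ => hgd l
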